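/- Let F be a field of positive characteristic p, let n be a positive integer, and let Γ be a finitely generated infinite subgroup of GL_n(F) which is not virtually solvable. Then there exist a real constant c > 0 and a sequence (Γ_i) of finite-index subgroups of Γ whose indices n_i = [Γ : Γ_i] tend to infinity, such that d(Γ_i) ≥ c · log(n_i) for every i. -/

import Mathlib

/-!
The group is first realized over a field with good metric properties. The entries of `Γ` generate
a finitely generated domain of characteristic `p`, which by Noether normalization embeds into the
valuation ring of `K`, the algebraic closure of the field of Laurent series over `ZMod p`
(`exists_embedding`). So `Γ` becomes a bounded group of matrices over `K`. Although `K` is not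
locally compact, the entries of `Γ` lie in a finite extension of the Laurent series field, so the
congruence subgroup of radius `D * s ^ a` has index at most `C ^ a` (`PolyFinite`,
`index_congSubgroup_le`).

If the congruence subgroups `H a` of radius `D * s ^ a` decrease strictly, the theorem follows.
Both commutators and `p`-th powers of elements of `H a` lie in `H (2 * a)`, hence
`H a / H (2 * a)` is elementary abelian of order at least `2 ^ a`, so `d(H a) ≥ a / log p`, whereas
`log [Γ : H a] ≤ a log C` (`LogRankGrowth.of_filtration`).

It remains to find elements of `Γ` at distance exactly `D * s ^ a` from `1` for all `a`. Passing to
subquotients of the representation and to finite-index subgroups, one may assume that no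
finite-index subgroup stabilizes a proper subspace, the property of not being virtually solvable
being inherited by one of the pieces (`LogRankGrowth.of_boundedRep`). By Burnside's theorem a
congruence subgroup then spans the matrix algebra, and a trace argument gives an element with two
distinct eigenvalues (`exists_two_roots`); a suitable `p`-power `x` of it is diagonalizable. Let `s`
be the maximal value of a difference of two eigenvalues of `x`. By irreducibility, some `y` close
to `1` has a nonzero entry where this maximum is attained, and iterated commutators of `y` with
(powers of) `x` approach `1` at a rate of exactly `s` per step (`LogRankGrowth.of_diagonal`).
-/

open scoped NNReal

/-! ### Growth of the number of generators along a filtration -/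

/-- `G` has a sequence of finite-index subgroups, of index tending to infinity, whose minimal
number of generators grows at least logarithmically in the index. The bound on the number of
generators is phrased as a bound on the size of every finite generating set. -/
def LogRankGrowth (G : Type*) [Group G] : Prop :=
    ∃ c : ℝ, 0 < c ∧ ∃ Γi : ℕ → Subgroup G,
      (∀ i, (Γi i).FiniteIndex) ∧
      Filter.Tendsto (fun i => (Γi i).index) Filter.atTop Filter.atTop ∧
      ∀ i, ∀ S : Finset (Γi i), Subgroup.closure (S : Set (Γi i)) = ⊤ →
        c * Real.logb 2 ((Γi i).index) ≤ (S.card : ℝ)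

/-- Logarithmic growth passes from a finite-index subgroup to the whole group: the indices get
multiplied by the constant `[G : H]`, which is absorbed into `c` once they are at least `2`. -/
theorem LogRankGrowth.of_finiteIndex {G : Type*} [Group G] (H : Subgroup G) [hH : H.FiniteIndex]
    (h : LogRankGrowth H) : LogRankGrowth G := by
  classical
  obtain ⟨c, hc, Γi, hfi, htend, hgen⟩ := h
  obtain ⟨i₀, hi₀⟩ := (htend.eventually_ge_atTop 2).exists_forall_of_atTop
  have hidx : ∀ i, ((Γi i).map H.subtype).index = (Γi i).index * H.index := fun i => by
    rw [Subgroup.index_map_subtype]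
  set L := Real.logb 2 H.index with hL
  have hH1 : 1 ≤ H.index := Nat.one_le_iff_ne_zero.2 hH.index_ne_zero
  have hL0 : 0 ≤ L := Real.logb_nonneg (by norm_num) (by exact_mod_cast hH1)
  refine ⟨c / (1 + L), by positivity, fun i => (Γi (i + i₀)).map H.subtype, ?_, ?_, ?_⟩
  · intro i
    exact ⟨by rw [hidx]; exact mul_ne_zero (hfi _).index_ne_zero hH.index_ne_zero⟩
  · have := (Filter.tendsto_add_atTop_iff_nat i₀).2 htend
    refine Filter.tendsto_atTop_mono (fun i => ?_) this
    rw [hidx]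
    exact Nat.le_mul_of_pos_right _ hH1
  · intro i S hS
    have hge : 2 ≤ (Γi (i + i₀)).index := hi₀ _ (by omega)
    let e := (Γi (i + i₀)).equivMapOfInjective H.subtype H.subtype_injective
    have h1 := hgen (i + i₀) (S.image e.symm) (by
      rw [Finset.coe_image]
      have := congrArg (Subgroup.map e.symm.toMonoidHom) hS
      rw [MonoidHom.map_closure, Subgroup.map_top_of_surjective _ e.symm.surjective] at this
      exact this)
    have h2 : ((S.image e.symm).card : ℝ) ≤ S.card := by exact_mod_cast Finset.card_image_le
    refine le_trans ?_ (h1.trans h2)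
    have hn2 : (2 : ℝ) ≤ (Γi (i + i₀)).index := by exact_mod_cast hge
    have hlog1 : 1 ≤ Real.logb 2 ((Γi (i + i₀)).index) := by
      rw [Real.le_logb_iff_rpow_le (by norm_num) (by linarith)]; simpa using hn2
    rw [hidx, Nat.cast_mul, Real.logb_mul (by positivity) (by positivity), ← hL,
      div_mul_eq_mul_div, div_le_iff₀ (by positivity), mul_assoc]
    apply mul_le_mul_of_nonneg_left _ hc.le
    nlinarith

/-- If `G ⧸ N` is abelian of exponent dividing `p`, then `d` generators of `G` force
`[G : N] ≤ p ^ d`. -/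
theorem card_generators_ge {G : Type*} [Group G] {p : ℕ} (N : Subgroup G)
    (hcomm : ∀ g h : G, g * h * g⁻¹ * h⁻¹ ∈ N) (hpow : ∀ g : G, g ^ p ∈ N) (hp : 0 < p)
    (S : Finset G) (hS : Subgroup.closure (S : Set G) = ⊤) : N.index ≤ p ^ S.card := by
  classical
  have hnorm : N.Normal := ⟨fun n hn g => by
    have := N.mul_mem (hcomm g n) hn
    simpa [mul_assoc] using this⟩
  let _ : CommGroup (G ⧸ N) := { (inferInstance : Group (G ⧸ N)) with
    mul_comm := fun a b => by
      induction a using QuotientGroup.induction_on with | H a => ?_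
      induction b using QuotientGroup.induction_on with | H b => ?_
      rw [← QuotientGroup.mk_mul, ← QuotientGroup.mk_mul, QuotientGroup.eq]
      have := hcomm b⁻¹ a⁻¹
      simpa [mul_assoc] using this }
  have hgen : Subgroup.closure ((S.image (QuotientGroup.mk' N) : Finset (G ⧸ N)) : Set (G ⧸ N)) = ⊤ := by
    rw [Finset.coe_image, ← MonoidHom.map_closure, hS,
      Subgroup.map_top_of_surjective _ (QuotientGroup.mk'_surjective N)]
  have : Group.FG (G ⧸ N) := Group.fg_iff.2 ⟨_, hgen, Finset.finite_toSet _⟩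
  have h1 := card_dvd_exponent_pow_rank' (G ⧸ N) (n := p) (fun g => by
      induction g using QuotientGroup.induction_on with | H a => ?_
      rw [← QuotientGroup.mk_pow]
      exact (QuotientGroup.eq_one_iff _).2 (hpow a))
  have h2 : Group.rank (G ⧸ N) ≤ S.card := (Group.rank_le hgen).trans Finset.card_image_le
  exact (Nat.le_of_dvd (by positivity) h1).trans (Nat.pow_le_pow_right hp h2)

theorem two_pow_le_relIndex {G : Type*} [Group G] (H : ℕ → Subgroup G) (hH : StrictAnti H)
    (hfi : ∀ a, (H a).FiniteIndex) (a m : ℕ) : 2 ^ m ≤ (H (a + m)).relIndex (H a) := by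
  induction m with
  | zero => simp
  | succ m ih =>
    have h := Subgroup.relIndex_mul_relIndex (H (a + (m+1))) (H (a + m)) (H a)
      (hH (by omega)).le (hH.antitone (by omega))
    rw [← h, pow_succ, mul_comm]
    refine Nat.mul_le_mul ?_ ih
    have h0 : (H (a + (m+1))).relIndex (H (a + m)) ≠ 0 :=
      fun h => (hfi _).index_ne_zero (Subgroup.index_eq_zero_of_relIndex_eq_zero h)
    have h1 : (H (a + (m+1))).relIndex (H (a + m)) ≠ 1 := by
      rw [Ne, Subgroup.relIndex_eq_one]
      exact fun h => (hH (show a + m < a + (m+1) by omega)).not_ge h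
    omega

/-- The group-theoretic criterion. The quotient `H a / H (2 * a)` is elementary abelian of order
at least `2 ^ a`, so `H a` needs at least `a / log p` generators, while `log [G : H a] ≤ a log C`. -/
theorem LogRankGrowth.of_filtration {G : Type*} [Group G] {p : ℕ} (hp : p.Prime)
    (H : ℕ → Subgroup G) (hH : StrictAnti H)
    (hcomm : ∀ a, ∀ g ∈ H a, ∀ h ∈ H a, g * h * g⁻¹ * h⁻¹ ∈ H (2 * a))
    (hpow : ∀ a, ∀ g ∈ H a, g ^ p ∈ H (2 * a))
    (C : ℕ) (hidx : ∀ a, 1 ≤ a → (H a).index ≠ 0 ∧ (H a).index ≤ C ^ a) : LogRankGrowth G := by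
  have hfi1 : ∀ a, 1 ≤ a → (H a).FiniteIndex := fun a ha => ⟨(hidx a ha).1⟩
  have hfi : ∀ a, (H a).FiniteIndex := fun a =>
    have := hfi1 (a + 1) (by omega)
    Subgroup.finiteIndex_of_le (hH (Nat.lt_succ_self a)).le
  have hlow : ∀ a, 2 ^ a ≤ (H a).index := fun a => by
    have h := two_pow_le_relIndex H hH hfi 0 a
    rw [zero_add] at h
    refine h.trans (Nat.le_of_dvd (Nat.pos_of_ne_zero (hfi a).index_ne_zero)
      (Subgroup.relIndex_dvd_index_of_le (hH.antitone (Nat.zero_le a))))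
  have hC : 2 ≤ C := by
    have h1 := hlow 1
    have h2 := (hidx 1 le_rfl).2
    rw [pow_one] at h1 h2
    omega
  have hp2 : (2 : ℝ) ≤ p := by exact_mod_cast hp.two_le
  have hC2 : (2 : ℝ) ≤ C := by exact_mod_cast hC
  have hlp : 0 < Real.logb 2 p := Real.logb_pos (by norm_num) (by linarith)
  have hlC : 0 < Real.logb 2 C := Real.logb_pos (by norm_num) (by linarith)
  refine ⟨1 / (Real.logb 2 p * Real.logb 2 C), by positivity, fun i => H (i + 1),
    fun i => hfi _, ?_, ?_⟩
  · refine Filter.tendsto_atTop_mono (fun i => ?_) (Filter.tendsto_add_atTop_nat 1)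
    exact (Nat.lt_two_pow_self).le.trans (hlow (i + 1))
  · intro i S hS
    set a := i + 1 with ha
    have h1 := card_generators_ge ((H (2 * a)).subgroupOf (H a))
      (fun g h => hcomm a g g.2 h h.2) (fun g => hpow a g g.2) hp.pos S hS
    have h2 : 2 ^ a ≤ ((H (2 * a)).subgroupOf (H a)).index := by
      have := two_pow_le_relIndex H hH hfi a a
      rwa [← two_mul] at this
    have h3 : (2 : ℝ) ^ a ≤ (p : ℝ) ^ S.card := by exact_mod_cast h2.trans h1
    have h4 : (a : ℝ) ≤ S.card * Real.logb 2 p := by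
      have := Real.logb_le_logb_of_le (b := 2) (by norm_num) (by positivity) h3
      simpa [Real.logb_pow] using this
    have h5 : Real.logb 2 (H a).index ≤ a * Real.logb 2 C := by
      have h : ((H a).index : ℝ) ≤ (C : ℝ) ^ a := by exact_mod_cast (hidx a (by omega)).2
      have := Real.logb_le_logb_of_le (b := 2) (by norm_num)
        (by exact_mod_cast Nat.pos_of_ne_zero (hfi a).index_ne_zero) h
      simpa [Real.logb_pow] using this
    rw [div_mul_eq_mul_div, one_mul, div_le_iff₀ (by positivity)]
    calc _ ≤ _ := h5
      _ ≤ (S.card * Real.logb 2 p) * Real.logb 2 C := by gcongr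
      _ = _ := by ring

/-! ### Matrices over a valued field and congruence subgroups -/

section MatrixValuation

variable {K : Type*} [Field K] (v : Valuation K ℝ≥0) {ι : Type*}

/-- All entries of `A` have value at most `r`. -/
def EntriesLE (A : Matrix ι ι K) (r : ℝ≥0) : Prop := ∀ i j, v (A i j) ≤ r

variable {v}

theorem EntriesLE.mono {A : Matrix ι ι K} {r s : ℝ≥0} (h : EntriesLE v A r) (hrs : r ≤ s) :
    EntriesLE v A s := fun i j => (h i j).trans hrs

theorem EntriesLE.add {A B : Matrix ι ι K} {r : ℝ≥0} (hA : EntriesLE v A r)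
    (hB : EntriesLE v B r) : EntriesLE v (A + B) r :=
  fun i j => v.map_add_le (hA i j) (hB i j)

theorem EntriesLE.neg {A : Matrix ι ι K} {r : ℝ≥0} (hA : EntriesLE v A r) :
    EntriesLE v (-A) r := fun i j => by simpa using hA i j

theorem EntriesLE.sub {A B : Matrix ι ι K} {r : ℝ≥0} (hA : EntriesLE v A r)
    (hB : EntriesLE v B r) : EntriesLE v (A - B) r :=
  fun i j => v.map_sub_le (hA i j) (hB i j)

variable [Fintype ι]

theorem EntriesLE.mul {A B : Matrix ι ι K} {r s : ℝ≥0} (hA : EntriesLE v A r)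
    (hB : EntriesLE v B s) : EntriesLE v (A * B) (r * s) := fun i j => by
  rw [Matrix.mul_apply]
  exact v.map_sum_le fun k _ => by rw [map_mul]; exact mul_le_mul' (hA _ _) (hB _ _)

/-- The least bound for the entries of a matrix exists (it is their maximal value). -/
theorem exists_entriesLE (A : Matrix ι ι K) :
    ∃ t, EntriesLE v A t ∧ ∀ s, EntriesLE v A s → t ≤ s := by
  refine ⟨Finset.univ.sup fun x : ι × ι => v (A x.1 x.2), fun i j => ?_, fun s hs => ?_⟩
  · exact Finset.le_sup (f := fun x : ι × ι => v (A x.1 x.2)) (Finset.mem_univ (i, j))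
  · exact Finset.sup_le fun x _ => hs _ _

variable [DecidableEq ι]

theorem EntriesLE.pow {A : Matrix ι ι K} {r : ℝ≥0} (hA : EntriesLE v A r) {k : ℕ}
    (hk : 1 ≤ k) : EntriesLE v (A ^ k) (r ^ k) := by
  induction k, hk using Nat.le_induction with
  | base => simpa using hA
  | succ k hk ih => rw [pow_succ, pow_succ]; exact ih.mul hA

/-- The inverse of a matrix congruent to `1` is congruent to `1` to the same precision. No
integrality of `B` is assumed: `B - 1 = -(A - 1) - (A - 1) (B - 1)` forces the maximal value of
`B - 1` to be at most `r`, as `r < 1`. -/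
theorem EntriesLE.inv {A B : Matrix ι ι K} {r : ℝ≥0} (hr : r < 1) (hA : EntriesLE v (A - 1) r)
    (hAB : A * B = 1) : EntriesLE v (B - 1) r := by
  obtain ⟨t, ht, hmin⟩ := exists_entriesLE (v := v) (B - 1)
  have h1 : B - 1 = -((A - 1) + (A - 1) * (B - 1)) := by
    have : (A - 1) * (B - 1) = A * B - A - B + 1 := by noncomm_ring
    rw [this, hAB]; abel
  have h2 : EntriesLE v (B - 1) (max r (r * t)) := by
    rw [h1]
    exact ((hA.mono (le_max_left _ _)).add ((hA.mul ht).mono (le_max_right _ _))).neg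
  have h3 := hmin _ h2
  rcases le_max_iff.1 h3 with h | h
  · exact ht.mono h
  · refine ht.mono ?_
    rcases eq_or_ne t 0 with rfl | h0
    · exact zero_le
    · exact absurd (mul_lt_of_lt_one_left (pos_iff_ne_zero.2 h0) hr) h.not_gt

variable {G : Type*} [Group G]

variable (v) in
/-- The congruence subgroup of radius `r < 1`: the elements whose matrix is within `r` of the
identity matrix, entry by entry. -/
def congSubgroup (M : G →* Matrix ι ι K) (r : ℝ≥0) (hr : r < 1) : Subgroup G where
  carrier := {g | EntriesLE v (M g - 1) r}
  one_mem' := by intro i j; simp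
  mul_mem' := by
    intro a b ha hb
    have : M (a * b) - 1 = (M a - 1) * (M b - 1) + ((M a - 1) + (M b - 1)) := by
      rw [map_mul]; noncomm_ring
    show EntriesLE v (M (a * b) - 1) r
    rw [this]
    exact ((ha.mul hb).mono (mul_le_of_le_one_right' hr.le)).add (ha.add hb)
  inv_mem' := by
    intro a ha
    exact EntriesLE.inv hr ha (by rw [← map_mul, mul_inv_cancel, map_one])

theorem mem_congSubgroup {M : G →* Matrix ι ι K} {r : ℝ≥0} {hr : r < 1} {g : G} :
    g ∈ congSubgroup v M r hr ↔ EntriesLE v (M g - 1) r := Iff.rfl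

theorem commutator_mem_congSubgroup {M : G →* Matrix ι ι K} {r s : ℝ≥0} {hr : r < 1} {hs : s < 1}
    (hrs : r * r ≤ s) {g h : G}
    (hg : g ∈ congSubgroup v M r hr) (hh : h ∈ congSubgroup v M r hr) :
    g * h * g⁻¹ * h⁻¹ ∈ congSubgroup v M s hs := by
  rw [mem_congSubgroup] at *
  have hinv : M (h * g) * M (g⁻¹ * h⁻¹) = 1 := by rw [← map_mul]; simp [mul_assoc]
  have h1 : EntriesLE v (M (h * g) - 1) r :=
    mem_congSubgroup.1 ((congSubgroup v M r hr).mul_mem hh hg)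
  have h2 := EntriesLE.inv hr h1 hinv
  have h3 : M (g * h * g⁻¹ * h⁻¹) - 1 = ((M g - 1) * (M h - 1) - (M h - 1) * (M g - 1)) +
      ((M g - 1) * (M h - 1) - (M h - 1) * (M g - 1)) * (M (g⁻¹ * h⁻¹) - 1) := by
    have e1 : M (g * h * g⁻¹ * h⁻¹) = M g * M h * M (g⁻¹ * h⁻¹) := by simp [mul_assoc]
    have e2 : (M g - 1) * (M h - 1) - (M h - 1) * (M g - 1) = M g * M h - M (h * g) := by
      rw [map_mul]; noncomm_ring
    rw [e1, e2, mul_sub, sub_mul, hinv]; noncomm_ring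
  have h4 : EntriesLE v ((M g - 1) * (M h - 1) - (M h - 1) * (M g - 1)) (r * r) :=
    (hg.mul hh).sub (hh.mul hg)
  rw [h3]
  exact (h4.mono hrs).add ((h4.mul h2).mono ((mul_le_of_le_one_right' hr.le).trans hrs))

theorem pow_mem_congSubgroup {p : ℕ} (hp : p.Prime) [CharP K p] {M : G →* Matrix ι ι K}
    {r s : ℝ≥0} {hr : r < 1} {hs : s < 1} (hrs : r * r ≤ s) {g : G}
    (hg : g ∈ congSubgroup v M r hr) : g ^ p ∈ congSubgroup v M s hs := by
  rw [mem_congSubgroup] at *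
  rcases isEmpty_or_nonempty ι with hι | hι
  · exact fun i => isEmptyElim i
  have := Fact.mk hp
  have h : M (g ^ p) - 1 = (M g - 1) ^ p := by
    rw [map_pow, sub_pow_char_of_commute p (Commute.one_right _), one_pow]
  rw [h]
  refine (hg.pow hp.one_le).mono (le_trans ?_ hrs)
  rw [← pow_two]
  exact pow_le_pow_right_of_le_one' hr.le hp.two_le

variable (v) in
/-- A weak form of local compactness, which an algebraic closure of a local field still has:
every finite set of scalars lies in a subring `E` in which each ball of radius `B` is covered by
at most `C ^ k` balls of radius `ρ ^ k`, with `C` independent of `k`. The covering is encoded by a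
colouring `f` such that points of `E` of the same colour are at distance at most `ρ ^ k`. -/
def PolyFinite (ρ : ℝ≥0) : Prop :=
  ∀ S : Finset K, ∃ E : Subring K, (S : Set K) ⊆ E ∧ ∀ B : ℝ≥0, ∃ C : ℕ, ∀ k, 1 ≤ k →
    ∃ f : K → Fin (C ^ k), ∀ z ∈ E, ∀ w ∈ E, v z ≤ B → v w ≤ B → f z = f w → v (z - w) ≤ ρ ^ k

/-- For a finitely generated bounded group, the congruence subgroup of radius `D * s ^ a` has index
at most exponential in `a`: the matrix entries lie in one subring `E` as in `PolyFinite`, and two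
elements whose entries have the same colours are congruent. -/
theorem index_congSubgroup_le {ρ : ℝ≥0} (hρ : ρ < 1) (hfin : PolyFinite v ρ)
    [hG : Group.FG G] (M : G →* Matrix ι ι K) (B : ℝ≥0) (hB : ∀ g, EntriesLE v (M g) B)
    (D s : ℝ≥0) (hD : 0 < D) (hs : 0 < s) (hr : ∀ a : ℕ, D * s ^ a < 1) :
    ∃ C : ℕ, ∀ a, 1 ≤ a → (congSubgroup v M (D * s ^ a) (hr a)).index ≠ 0 ∧
      (congSubgroup v M (D * s ^ a) (hr a)).index ≤ C ^ a := by
  classical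
  obtain ⟨T, hT⟩ := hG.out
  let S : Finset K := (T ∪ T.image (·⁻¹)).biUnion fun g =>
    Finset.univ.image fun x : ι × ι => M g x.1 x.2
  obtain ⟨E, hSE, hE⟩ := hfin S
  have hmem : ∀ g : G, (∀ i j, M g i j ∈ E) := by
    intro g
    have hg : g ∈ Subgroup.closure (T : Set G) := by rw [hT]; trivial
    induction hg using Subgroup.closure_induction'' with
    | mem x hx =>
      intro i j
      refine hSE (Finset.mem_coe.2 (Finset.mem_biUnion.2 ⟨x, by simp_all, ?_⟩))
      exact Finset.mem_image.2 ⟨(i, j), by simp⟩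
    | inv_mem x hx =>
      intro i j
      refine hSE (Finset.mem_coe.2 (Finset.mem_biUnion.2 ⟨x⁻¹, by simp_all, ?_⟩))
      exact Finset.mem_image.2 ⟨(i, j), by simp⟩
    | one =>
      intro i j
      rw [map_one, Matrix.one_apply]; split_ifs
      exacts [E.one_mem, E.zero_mem]
    | mul x y _ _ hx hy =>
      intro i j
      rw [map_mul, Matrix.mul_apply]
      exact E.sum_mem fun k _ => E.mul_mem (hx _ _) (hy _ _)
  obtain ⟨C, hC⟩ := hE B
  -- `t` is chosen so that precision `ρ ^ (t * (a + 1))` implies precision `D * s ^ a / B`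
  obtain ⟨t₁, ht₁⟩ := exists_pow_lt_of_lt_one (show 0 < D / (B + 1) by positivity) hρ
  obtain ⟨t₂, ht₂⟩ := exists_pow_lt_of_lt_one hs hρ
  set t := t₁ + t₂ + 1
  have h1 : ρ ^ t ≤ D / (B + 1) := (pow_le_pow_right_of_le_one' hρ.le (by omega)).trans ht₁.le
  have h2 : ρ ^ t ≤ s := (pow_le_pow_right_of_le_one' hρ.le (by omega)).trans ht₂.le
  refine ⟨(C ^ (2 * t)) ^ (Fintype.card (ι × ι)), fun a ha => ?_⟩
  obtain ⟨f, hf⟩ := hC (t * (a + 1)) (Nat.mul_pos (by omega) (by omega))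
  set H := congSubgroup v M (D * s ^ a) (hr a)
  have hC1 : 1 ≤ C := by
    have h0 : 0 < C ^ (t * (a + 1)) := (Nat.zero_le _).trans_lt (f 0).2
    exact Nat.pos_of_ne_zero fun h => by
      rw [h, zero_pow (Nat.mul_pos (by omega) (by omega)).ne'] at h0
      omega
  let F : G ⧸ H → (ι × ι → Fin (C ^ (t * (a + 1)))) := fun q x => f (M q.out x.1 x.2)
  have hF : Function.Injective F := by
    intro q₁ q₂ h
    rw [← q₁.out_eq', ← q₂.out_eq']
    refine QuotientGroup.eq.2 ?_
    rw [mem_congSubgroup]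
    set g := q₁.out
    set h' := q₂.out
    have e : M (g⁻¹ * h') - 1 = M g⁻¹ * (M h' - M g) := by
      rw [mul_sub, ← map_mul, ← map_mul, inv_mul_cancel, map_one]
    have hd : EntriesLE v (M h' - M g) (ρ ^ (t * (a + 1))) := fun i j =>
      hf _ (hmem _ _ _) _ (hmem _ _ _) (hB _ _ _) (hB _ _ _) (congrFun h (i, j)).symm
    rw [e]
    refine ((hB _).mul hd).mono ?_
    calc B * ρ ^ (t * (a + 1)) = B * ρ ^ t * (ρ ^ t) ^ a := by ring
      _ ≤ B * (D / (B + 1)) * s ^ a := by gcongr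
      _ ≤ D * s ^ a := by
        gcongr
        rw [← mul_div_assoc, div_le_iff₀ (by positivity)]
        nlinarith [zero_le (a := D)]
  have := Finite.of_injective F hF
  refine ⟨Subgroup.index_ne_zero_of_finite, ?_⟩
  have h3 := Nat.card_le_card_of_injective F hF
  rw [Nat.card_eq_fintype_card (α := _ → _), Fintype.card_fun, Fintype.card_fin] at h3
  refine h3.trans ?_
  rw [← pow_mul, ← pow_mul, ← pow_mul]
  refine Nat.pow_le_pow_right hC1 ?_
  have : t * (a + 1) ≤ 2 * t * a := by nlinarith
  calc _ ≤ (2 * t * a) * Fintype.card (ι × ι) := by gcongr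
    _ = _ := by ring

end MatrixValuation

/-! ### Commutators with a diagonal element -/

section CommutatorGrowth

variable {K : Type*} [Field K] {v : Valuation K ℝ≥0} {ι : Type*} [Fintype ι] [DecidableEq ι]
  {G : Type*} [Group G]

/-- The commutator of `g`, close to `1`, with a diagonal element `x`. To leading order the
`(i, j)` entry of `[g, x] - 1` is `(M g - 1) i j * (μ i - μ j)` up to a unit; the error is strictly
smaller than the maximum `d` of all these leading terms. -/
theorem commutator_diagonal_step {M : G →* Matrix ι ι K} {g x : G} {r d : ℝ≥0} (hr : r < 1)
    (hg : EntriesLE v (M g - 1) r) {μ : ι → K} (hx : M x = Matrix.diagonal μ)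
    (hμ : ∀ i, v (μ i) = 1) (hd : 0 < d)
    (hW : ∀ i j, v ((M g - 1) i j) * v (μ i - μ j) ≤ d) (i j : ι) :
    v ((M (g⁻¹ * x⁻¹ * g * x) - 1) i j) ≤ d ∧
    (v ((M g - 1) i j) * v (μ i - μ j) < d → v ((M (g⁻¹ * x⁻¹ * g * x) - 1) i j) < d) ∧
    (v ((M g - 1) i j) * v (μ i - μ j) = d → v ((M (g⁻¹ * x⁻¹ * g * x) - 1) i j) = d) := by
  have hμ0 : ∀ i, μ i ≠ 0 := fun i h => by simpa [h] using hμ i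
  have hxinv : M x⁻¹ = Matrix.diagonal (fun i => (μ i)⁻¹) := by
    have h1 : M x⁻¹ * M x = 1 := by rw [← map_mul, inv_mul_cancel, map_one]
    have h2 : M x * Matrix.diagonal (fun i => (μ i)⁻¹) = 1 := by
      rw [hx, Matrix.diagonal_mul_diagonal, ← Matrix.diagonal_one]
      congr 1; ext i; exact mul_inv_cancel₀ (hμ0 i)
    calc M x⁻¹ = M x⁻¹ * (M x * Matrix.diagonal (fun i => (μ i)⁻¹)) := by rw [h2, mul_one]
      _ = _ := by rw [← mul_assoc, h1, one_mul]
  set W : Matrix ι ι K := M x⁻¹ * ((M g - 1) * M x - M x * (M g - 1)) with hWdef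
  have hWij : ∀ i j, v (W i j) = v ((M g - 1) i j) * v (μ i - μ j) := by
    intro i j
    rw [hWdef, hxinv, hx, Matrix.diagonal_mul, Matrix.sub_apply, Matrix.mul_diagonal,
      Matrix.diagonal_mul]
    have : (M g - 1) i j * μ j - μ i * (M g - 1) i j = -((M g - 1) i j * (μ i - μ j)) := by ring
    rw [this, map_mul, Valuation.map_neg, map_mul, map_inv₀, hμ]; simp
  have hWd : EntriesLE v W d := fun i j => by rw [hWij]; exact hW i j
  have hinv := EntriesLE.inv hr hg (B := M g⁻¹) (by rw [← map_mul, mul_inv_cancel, map_one])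
  have e : M (g⁻¹ * x⁻¹ * g * x) - 1 = W + (M g⁻¹ - 1) * W := by
    have e1 : (M g⁻¹ * M x⁻¹) * (M x * M g) = 1 := by
      rw [← map_mul, ← map_mul, ← map_mul]; simp [mul_assoc]
    have e2 : W = M x⁻¹ * (M g * M x - M x * M g) := by rw [hWdef]; noncomm_ring
    have e3 : W + (M g⁻¹ - 1) * W = M g⁻¹ * W := by noncomm_ring
    rw [e3, e2, ← mul_assoc, mul_sub, e1]
    simp [mul_assoc]
  have herr : v (((M g⁻¹ - 1) * W) i j) < d :=
    ((hinv.mul hWd) i j).trans_lt (mul_lt_of_lt_one_left hd hr)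
  rw [e, Matrix.add_apply, ← hWij i j]
  refine ⟨v.map_add_le (hWd i j) herr.le, fun h => v.map_add_lt h herr, fun h => ?_⟩
  rw [Valuation.map_add_eq_of_lt_left v (by rwa [h]), h]

/-- A bounded finitely generated group with a diagonal element `x` close to `1` has logarithmic
growth as soon as some `y` close to `1` has a nonzero entry at a far position `(i₀, j₀)`, that is, one
where `v (μ i - μ j)` attains its maximum `s`. Each commutator with `x` multiplies the distance
to `1` by exactly `s`, provided that this distance is attained at far positions only. Hence
the congruence subgroups of radius `D * s ^ a` decrease strictly. -/
theorem LogRankGrowth.of_diagonal {p : ℕ} (hp : p.Prime) [CharP K p] {ρ : ℝ≥0} (hρ : ρ < 1)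
    (hfin : PolyFinite v ρ) [hG : Group.FG G] (M : G →* Matrix ι ι K) (B : ℝ≥0)
    (hB : ∀ g, EntriesLE v (M g) B) {x : G} {μ : ι → K} (hx : M x = Matrix.diagonal μ)
    (hμ : ∀ i, v (μ i) = 1) {s : ℝ≥0} (hs0 : 0 < s) (hs1 : s < 1)
    (hs : ∀ i j, v (μ i - μ j) ≤ s) {y : G} (hy : EntriesLE v (M y - 1) ρ)
    {i₀ j₀ : ι} (hij : v (μ i₀ - μ j₀) = s) (hyij : M y i₀ j₀ ≠ 0) : LogRankGrowth G := by
  classical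
  have := Fact.mk hp
  have hne : i₀ ≠ j₀ := by rintro rfl; simp [hs0.ne] at hij
  -- `R` is the largest value of a far entry of `y - 1`
  obtain ⟨⟨i₁, j₁⟩, hm₁, hmax⟩ := Finset.exists_max_image
    (Finset.univ.filter fun x : ι × ι => v (μ x.1 - μ x.2) = s)
    (fun x => v ((M y - 1) x.1 x.2)) ⟨(i₀, j₀), by simp [hij]⟩
  simp only [Finset.mem_filter, Finset.mem_univ, true_and, Prod.forall] at hm₁ hmax
  set R := v ((M y - 1) i₁ j₁) with hR
  have hR0 : 0 < R := by
    refine lt_of_lt_of_le ?_ (hmax i₀ j₀ hij)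
    simpa [Matrix.sub_apply, Matrix.one_apply_ne hne, pos_iff_ne_zero] using hyij
  have hR1 : R < 1 := (hy _ _).trans_lt hρ
  -- the value `s'` below is the largest non-maximal difference; the commutator of `y` with `x ^ q`, `q` a large
  -- power of `p`, has its dominant entries at far positions since `s' ^ q < R * s ^ q`
  obtain ⟨⟨i₂, j₂⟩, hm₂, hmax₂⟩ := Finset.exists_max_image
    (Finset.univ.filter fun x : ι × ι => v (μ x.1 - μ x.2) < s)
    (fun x => v (μ x.1 - μ x.2)) ⟨(i₀, i₀), by simp [hs0]⟩
  simp only [Finset.mem_filter, Finset.mem_univ, true_and, Prod.forall] at hm₂ hmax₂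
  set s' := v (μ i₂ - μ j₂) with hs'
  obtain ⟨m, hm⟩ := exists_pow_lt_of_lt_one hR0 (show s' / s < 1 by rwa [div_lt_one hs0])
  set q := p ^ m with hq
  have hmq : m ≤ q := (Nat.lt_pow_self hp.one_lt).le
  have hq1 : q ≠ 0 := pow_ne_zero _ hp.ne_zero
  have hqs : s' ^ q < R * s ^ q := by
    have : (s' / s) ^ q < R :=
      (pow_le_pow_right_of_le_one' (by rw [div_le_one hs0]; exact hm₂.le) hmq).trans_lt hm
    rwa [div_pow, div_lt_iff₀ (by positivity)] at this
  set D := R * s ^ q with hD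
  have hD0 : 0 < D := by positivity
  have hD1 : D < 1 := mul_lt_one_of_lt_of_le hR1 (pow_le_one₀ zero_le hs1.le)
  have hDa : ∀ a : ℕ, D * s ^ a < 1 := fun a =>
    mul_lt_one_of_lt_of_le hD1 (pow_le_one₀ zero_le hs1.le)
  have hvq : ∀ i j, v (μ i ^ q - μ j ^ q) = v (μ i - μ j) ^ q := fun i j => by
    rw [← map_pow, hq, sub_pow_char_pow]
  -- `Good g d`: the distance from `g` to `1` is `d`, attained at far positions only
  let Good : G → ℝ≥0 → Prop := fun g d =>
    EntriesLE v (M g - 1) d ∧ (∀ i j, v (μ i - μ j) < s → v ((M g - 1) i j) < d) ∧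
      ∃ i j, v (μ i - μ j) = s ∧ v ((M g - 1) i j) = d
  have base : ∃ g, Good g D := by
    have hxq : M (x ^ q) = Matrix.diagonal (fun i => μ i ^ q) := by
      rw [map_pow, hx, Matrix.diagonal_pow]; rfl
    have hnear : ∀ i j, v (μ i - μ j) < s → v ((M y - 1) i j) * v (μ i ^ q - μ j ^ q) < D := by
      intro i j h
      refine lt_of_le_of_lt ?_ hqs
      rw [hvq]
      calc _ ≤ 1 * v (μ i - μ j) ^ q := by gcongr; exact (hy i j).trans hρ.le
        _ ≤ s' ^ q := by rw [one_mul]; exact pow_le_pow_left' (hmax₂ i j h) q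
    have hall : ∀ i j, v ((M y - 1) i j) * v (μ i ^ q - μ j ^ q) ≤ D := by
      intro i j
      rcases (hs i j).lt_or_eq with h | h
      · exact (hnear i j h).le
      · rw [hvq, h]; exact mul_le_mul_left (hmax i j h) _
    have key := commutator_diagonal_step hρ hy hxq (fun i => by simp [hμ]) hD0 hall
    exact ⟨_, fun i j => (key i j).1, fun i j h => (key i j).2.1 (hnear i j h),
      i₁, j₁, hm₁, (key i₁ j₁).2.2 (by rw [hvq, hm₁])⟩
  have step : ∀ g d, 0 < d → d < 1 → Good g d → ∃ g', Good g' (d * s) := by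
    rintro g d hd hd1 ⟨h1, h2, i, j, h3, h4⟩
    have key := commutator_diagonal_step hd1 h1 hx hμ (d := d * s) (by positivity)
      (fun i j => mul_le_mul' (h1 i j) (hs i j))
    refine ⟨_, fun i j => (key i j).1, fun i j h => (key i j).2.1 ?_,
      i, j, h3, (key i j).2.2 (by rw [h3, h4])⟩
    exact mul_lt_mul'' (h2 i j h) h zero_le zero_le
  have hgood : ∀ a : ℕ, ∃ g, Good g (D * s ^ a) := by
    intro a
    induction a with
    | zero => simpa using base
    | succ a ih =>
      obtain ⟨g, hg⟩ := ih
      have := step g _ (by positivity) (hDa a) hg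
      rwa [mul_assoc, ← pow_succ] at this
  obtain ⟨C, hC⟩ := index_congSubgroup_le hρ hfin M B hB D s hD0 hs0 hDa
  have hsq : ∀ a : ℕ, D * s ^ a * (D * s ^ a) ≤ D * s ^ (2 * a) := fun a => by
    calc _ = D * (D * s ^ (2 * a)) := by ring
      _ ≤ _ := mul_le_of_le_one_left' hD1.le
  refine LogRankGrowth.of_filtration hp (fun a => congSubgroup v M (D * s ^ a) (hDa a))
    (strictAnti_nat_of_succ_lt fun a => ?_)
    (fun a g hg h hh => commutator_mem_congSubgroup (hsq a) hg hh)
    (fun a g hg => pow_mem_congSubgroup hp (hsq a) hg) C hC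
  have hlt : D * s ^ (a + 1) < D * s ^ a := by
    rw [pow_succ, ← mul_assoc]
    exact mul_lt_of_lt_one_right (by positivity) hs1
  refine lt_of_le_of_ne (fun g hg => EntriesLE.mono hg hlt.le) fun h => ?_
  obtain ⟨g, hg, -, i, j, -, hgij⟩ := hgood a
  have : g ∈ congSubgroup v M (D * s ^ (a + 1)) (hDa (a + 1)) := by rw [h]; exact hg
  exact absurd (this i j) (by rw [hgij]; exact hlt.not_ge)

end CommutatorGrowth

/-! ### Representations: virtual solvability, boundedness and Burnside's theorem -/

section Reps

open Module

/-- The derived series of a subgroup `H`, with its terms viewed as subgroups of the ambient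
group. -/
def iteratedCommutator {G : Type*} [Group G] (H : Subgroup G) : ℕ → Subgroup G
  | 0 => H
  | k + 1 => ⁅iteratedCommutator H k, iteratedCommutator H k⁆

theorem iteratedCommutator_mono {G : Type*} [Group G] {H₁ H₂ : Subgroup G} (h : H₁ ≤ H₂) (k : ℕ) :
    iteratedCommutator H₁ k ≤ iteratedCommutator H₂ k := by
  induction k with
  | zero => exact h
  | succ k ih => exact Subgroup.commutator_mono ih ih

theorem iteratedCommutator_antitone {G : Type*} [Group G] (H : Subgroup G) :
    Antitone (iteratedCommutator H) := by
  refine antitone_nat_of_succ_le fun k => ?_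
  exact Subgroup.commutator_le.2 fun a ha b hb =>
    Subgroup.mul_mem _ (Subgroup.mul_mem _ (Subgroup.mul_mem _ ha hb) (Subgroup.inv_mem _ ha))
      (Subgroup.inv_mem _ hb)

theorem map_iteratedCommutator {G G' : Type*} [Group G] [Group G'] (f : G →* G') (H : Subgroup G)
    (k : ℕ) : (iteratedCommutator H k).map f = iteratedCommutator (H.map f) k := by
  induction k with
  | zero => rfl
  | succ k ih => rw [iteratedCommutator, Subgroup.map_commutator, ih]; rfl

theorem iteratedCommutator_top {G : Type*} [Group G] (k : ℕ) :
    iteratedCommutator (⊤ : Subgroup G) k = derivedSeries G k := by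
  induction k with
  | zero => rfl
  | succ k ih => rw [iteratedCommutator, ih]; rfl

variable {K : Type*} [Field K] {G : Type*} [Group G] {V : Type*} [AddCommGroup V] [Module K V]

/-- The image of the representation is virtually solvable: the `k`-th derived subgroup of some
finite-index subgroup acts trivially. -/
def VirtSolvableRep (ρ : G →* End K V) : Prop :=
  ∃ H : Subgroup G, H.FiniteIndex ∧ ∃ k, ∀ g ∈ iteratedCommutator H k, ρ g = 1

/-- All matrix coefficients of the representation are bounded; this formulation needs no choice
of basis. -/
def BoundedRep (v : Valuation K ℝ≥0) (ρ : G →* End K V) : Prop :=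
  ∀ (w : V) (f : Dual K V), ∃ B, ∀ g, v (f (ρ g w)) ≤ B

/-- The subspace `W` is stable under the subgroup `H`. -/
def Stable (ρ : G →* End K V) (H : Subgroup G) (W : Submodule K V) : Prop :=
  ∀ h ∈ H, ∀ w ∈ W, ρ h w ∈ W

variable {ρ : G →* End K V} {H : Subgroup G} {W : Submodule K V}

/-- The representation of `H` on an `H`-stable subspace. -/
def subRep (hW : Stable ρ H W) : H →* End K W where
  toFun h := (ρ h).restrict (hW h h.2)
  map_one' := by ext; simp
  map_mul' a b := by ext; simp

/-- The representation of `H` on the quotient by an `H`-stable subspace. -/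
def quotRep (hW : Stable ρ H W) : H →* End K (V ⧸ W) where
  toFun h := W.mapQ W (ρ h) (hW h h.2)
  map_one' := by ext; simp
  map_mul' a b := by ext; simp

theorem BoundedRep.subRep {v : Valuation K ℝ≥0} (hρ : BoundedRep v ρ) (hW : Stable ρ H W) :
    BoundedRep v (subRep hW) := by
  intro w f
  obtain ⟨f', hf'⟩ := LinearMap.exists_extend f
  obtain ⟨B, hB⟩ := hρ w f'
  refine ⟨B, fun g => ?_⟩
  rw [← hf']
  exact hB g

theorem BoundedRep.quotRep {v : Valuation K ℝ≥0} (hρ : BoundedRep v ρ) (hW : Stable ρ H W) :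
    BoundedRep v (quotRep hW) := by
  intro w f
  obtain ⟨w, rfl⟩ := W.mkQ_surjective w
  obtain ⟨B, hB⟩ := hρ w (f ∘ₗ W.mkQ)
  exact ⟨B, fun g => hB g⟩

/-- Virtual solvability of an extension: elements acting trivially on both `W` and `V ⧸ W` commute
with each other, so one more derived step kills them. -/
theorem VirtSolvableRep.of_sub_quot [hH : H.FiniteIndex] (hW : Stable ρ H W)
    (h₁ : VirtSolvableRep (subRep hW)) (h₂ : VirtSolvableRep (quotRep hW)) :
    VirtSolvableRep ρ := by
  obtain ⟨H₁, hf₁, k₁, h₁⟩ := h₁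
  obtain ⟨H₂, hf₂, k₂, h₂⟩ := h₂
  have hf₁' : (H₁.map H.subtype).FiniteIndex :=
    ⟨by rw [Subgroup.index_map_subtype]; exact mul_ne_zero hf₁.index_ne_zero hH.index_ne_zero⟩
  have hf₂' : (H₂.map H.subtype).FiniteIndex :=
    ⟨by rw [Subgroup.index_map_subtype]; exact mul_ne_zero hf₂.index_ne_zero hH.index_ne_zero⟩
  set H₃ := H₁.map H.subtype ⊓ H₂.map H.subtype
  have t₁ : ∀ g ∈ iteratedCommutator H₃ (max k₁ k₂), ∀ w ∈ W, ρ g w = w := by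
    intro g hg w hw
    have := iteratedCommutator_mono inf_le_left _
      (iteratedCommutator_antitone _ (le_max_left k₁ k₂) hg)
    rw [← map_iteratedCommutator] at this
    obtain ⟨g, hg', rfl⟩ := this
    have := congrArg Subtype.val (LinearMap.congr_fun (h₁ g hg') ⟨w, hw⟩)
    exact this
  have t₂ : ∀ g ∈ iteratedCommutator H₃ (max k₁ k₂), ∀ w, ρ g w - w ∈ W := by
    intro g hg w
    have := iteratedCommutator_mono inf_le_right _
      (iteratedCommutator_antitone _ (le_max_right k₁ k₂) hg)
    rw [← map_iteratedCommutator] at this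
    obtain ⟨g, hg', rfl⟩ := this
    have := LinearMap.congr_fun (h₂ g hg') (W.mkQ w)
    exact (Submodule.Quotient.eq W).1 this
  refine ⟨H₃, inferInstance, max k₁ k₂ + 1, fun g hg => ?_⟩
  have hle : iteratedCommutator H₃ (max k₁ k₂ + 1) ≤ ρ.ker := by
    refine Subgroup.commutator_le.2 fun a ha b hb => ?_
    have hab : ρ (a * b) = ρ (b * a) := by
      ext w
      have h1 := t₁ a ha _ (t₂ b hb w)
      have h2 := t₁ b hb _ (t₂ a ha w)
      rw [map_sub, sub_eq_iff_eq_add] at h1 h2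
      rw [map_mul, map_mul, Module.End.mul_apply, Module.End.mul_apply, h1, h2]
      abel
    have e : a * b * a⁻¹ * b⁻¹ = (a * b) * (b * a)⁻¹ := by simp [mul_assoc]
    change ρ (a * b * a⁻¹ * b⁻¹) = 1
    rw [e, map_mul, hab, ← map_mul, mul_inv_cancel, map_one]
  exact hle hg

/-- The only subspaces stable under some finite-index subgroup are `⊥` and `⊤`. The zero space is
allowed. -/
def StronglyIrreducible (ρ : G →* End K V) : Prop :=
  ∀ H : Subgroup G, H.FiniteIndex → ∀ W, Stable ρ H W → W = ⊥ ∨ W = ⊤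

/-- Burnside's theorem: an irreducible group of operators over an algebraically closed field spans
the full endomorphism algebra. It follows from Schur's lemma and the density theorem. -/
theorem span_eq_top_of_irreducible [IsAlgClosed K] [FiniteDimensional K V] [Nontrivial V]
    (hirr : ∀ W, Stable ρ H W → W = ⊥ ∨ W = ⊤) :
    Submodule.span K (ρ '' (H : Set G)) = ⊤ := by
  let S : Submonoid (End K V) := H.toSubmonoid.map ρ
  let A := Algebra.adjoin K (S : Set (End K V))
  have hsimple : IsSimpleModule A V := by
    refine { eq_bot_or_eq_top := fun W => ?_ }
    have h := hirr (W.restrictScalars K) (fun h hh w hw => by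
      have : ρ h ∈ A := Algebra.subset_adjoin ⟨h, hh, rfl⟩
      exact W.smul_mem ⟨_, this⟩ hw)
    simpa using h
  have hbij := IsSimpleModule.algebraMap_end_bijective_of_isAlgClosed (A := A) (V := V) K
  have hA : A = ⊤ := by
    rw [eq_top_iff]
    intro T _
    let f : End (End A V) V :=
      { toFun := T
        map_add' := map_add T
        map_smul' := fun φ w => by
          obtain ⟨c, rfl⟩ := hbij.2 φ
          simp }
    obtain ⟨s, hs⟩ := (Module.Finite.fg_top : (⊤ : Submodule K V).FG)
    obtain ⟨r, hr⟩ := jacobson_density (R := A) f s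
    have : T = r.1 := by
      refine LinearMap.ext_on hs fun m hm => ?_
      exact hr m hm
    rw [this]; exact r.2
  have := Algebra.adjoin_eq_span K (S : Set (End K V))
  rw [Submonoid.closure_eq] at this
  change Submodule.span K (S : Set (End K V)) = ⊤
  rw [← this]
  change Subalgebra.toSubmodule A = ⊤
  rw [hA]; simp

end Reps

/-! ### Groups of matrices close to the identity -/

section Irreducible

open Module

variable {K : Type*} [Field K] {v : Valuation K ℝ≥0}

/-- The eigenvalues of a matrix congruent to `1` are congruent to `1`: compare the coordinates of
maximal value of an eigenvector. -/
theorem val_eigenvalue_sub_one_le {ι : Type*} [Fintype ι] [DecidableEq ι] {A : Matrix ι ι K}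
    {r : ℝ≥0} (hA : EntriesLE v (A - 1) r) {w : ι → K} (hw : w ≠ 0) {μ : K}
    (hμ : A.mulVec w = μ • w) : v (μ - 1) ≤ r := by
  have hne : Nonempty ι := by
    by_contra h
    rw [not_nonempty_iff] at h
    exact hw (Subsingleton.elim _ _)
  obtain ⟨i, hi⟩ := Finite.exists_max fun i => v (w i)
  have hpos : 0 < v (w i) := by
    obtain ⟨j, hj⟩ := Function.ne_iff.1 hw
    exact lt_of_lt_of_le (pos_iff_ne_zero.2 (v.ne_zero_iff.2 hj)) (hi j)
  have h : (μ - 1) * w i = ∑ j, (A - 1) i j * w j := by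
    have h1 : ((A - 1).mulVec w) i = (μ - 1) * w i := by
      rw [Matrix.sub_mulVec, hμ, Matrix.one_mulVec]; simp [sub_mul]
    rw [← h1]; rfl
  have h2 : v ((μ - 1) * w i) ≤ r * v (w i) := by
    rw [h]
    exact v.map_sum_le fun j _ => by rw [map_mul]; exact mul_le_mul' (hA _ _) (hi j)
  rw [map_mul] at h2
  exact le_of_mul_le_mul_right h2 hpos

theorem val_eq_one_of_pow_eq_one {x : K} {n : ℕ} (hn : n ≠ 0) (h : x ^ n = 1) : v x = 1 := by
  have : v x ^ n = 1 := by rw [← map_pow, h, map_one]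
  exact (pow_eq_one_iff.1 this).resolve_right hn

theorem val_natCast {p : ℕ} (hp : p.Prime) [CharP K p] {n : ℕ} (hn : (n : K) ≠ 0) :
    v (n : K) = 1 := by
  have := Fact.mk hp
  refine val_eq_one_of_pow_eq_one (n := p - 1) (by have := hp.two_le; omega) ?_
  have h0 : (n : ZMod p) ≠ 0 := by
    intro h
    rw [ZMod.natCast_eq_zero_iff] at h
    exact hn ((CharP.cast_eq_zero_iff K p n).2 h)
  have h1 := congrArg (ZMod.castHom (dvd_refl p) K) (ZMod.pow_card_sub_one_eq_one h0)
  simpa using h1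

/-- There are no roots of unity of order prime to `p` near `1`. -/
theorem eq_one_of_pow_eq_one {p : ℕ} (hp : p.Prime) [CharP K p] {n : ℕ} (hn : (n : K) ≠ 0)
    {z : K} (hz : z ^ n = 1) (h1 : v (z - 1) < 1) : z = 1 := by
  by_contra hne
  have hg : ∑ i ∈ Finset.range n, z ^ i = 0 := by
    have := geom_sum_mul z n
    rw [hz, sub_self] at this
    exact (mul_eq_zero.1 this).resolve_right (sub_ne_zero.2 hne)
  have hn0 : n ≠ 0 := by rintro rfl; simp at hn
  have hvz : v z = 1 := val_eq_one_of_pow_eq_one hn0 hz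
  have h2 : (n : K) = -∑ i ∈ Finset.range n, (z ^ i - 1) := by
    rw [Finset.sum_sub_distrib, hg]; simp
  have h3 : v (n : K) ≤ v (z - 1) := by
    rw [h2, Valuation.map_neg]
    refine v.map_sum_le fun i _ => ?_
    rw [← geom_sum_mul, map_mul]
    refine mul_le_of_le_one_left' (v.map_sum_le fun j _ => ?_)
    rw [map_pow, hvz, one_pow]
  rw [val_natCast hp hn] at h3
  exact absurd h1 h3.not_gt

theorem val_eq_one_of_val_sub_one_lt {z : K} (h : v (z - 1) < 1) : v z = 1 := by
  have h1 : v (1 + (z - 1)) = v 1 := v.map_add_eq_of_lt_left (h.trans_eq (map_one v).symm)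
  rwa [add_sub_cancel, map_one] at h1

/-- A subgroup `H` of matrices close to `1` which spans the full matrix algebra of size
`n > 1` has an element with two distinct eigenvalues. Suppose each `g ∈ H` has a single eigenvalue
`a g`, so that the trace is `n * a g`. If `p ∣ n`, the trace vanishes on the full matrix algebra,
which is absurd. Otherwise `a` is multiplicative, because `a ^ n` is the determinant and there are
no `n`-th roots of unity near `1`; so `trace / n` is a multiplicative functional on the matrix
algebra, which is impossible for `n > 1`. -/
theorem exists_two_roots [IsAlgClosed K] {p : ℕ} (hp : p.Prime) [CharP K p] {G : Type*} [Group G]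
    {ι : Type*} [Fintype ι] [DecidableEq ι] (M : G →* Matrix ι ι K) (H : Subgroup G) {r : ℝ≥0}
    (hr : r < 1) (hH : ∀ g ∈ H, EntriesLE v (M g - 1) r)
    (hspan : Submodule.span K (M '' (H : Set G)) = ⊤) (hcard : 1 < Fintype.card ι) :
    ∃ x ∈ H, ∃ a b, a ≠ b ∧ a ∈ (M x).charpoly.roots ∧ b ∈ (M x).charpoly.roots := by
  by_contra! hcon
  set n := Fintype.card ι with hn
  obtain ⟨i, j, hij⟩ := Fintype.one_lt_card_iff.1 hcard
  have key : ∀ g : G, ∃ a : K, g ∈ H → (M g).trace = n * a ∧ (M g).det = a ^ n ∧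
      v (a - 1) ≤ r := by
    intro g
    by_cases hg : g ∈ H
    swap
    · exact ⟨0, fun h => absurd h hg⟩
    have hc : Multiset.card (M g).charpoly.roots = n := by
      rw [IsAlgClosed.card_roots_eq_natDegree, Matrix.charpoly_natDegree_eq_dim]
    obtain ⟨a, ha⟩ := Multiset.card_pos_iff_exists_mem.1 (by rw [hc]; omega :
      0 < Multiset.card (M g).charpoly.roots)
    have hrep : (M g).charpoly.roots = Multiset.replicate n a := by
      refine Multiset.eq_replicate.2 ⟨hc, fun b hb => ?_⟩
      by_contra hne
      exact hcon g hg b a hne hb ha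
    refine ⟨a, fun _ => ⟨?_, ?_, ?_⟩⟩
    · rw [Matrix.trace_eq_sum_roots_charpoly, hrep, Multiset.sum_replicate, nsmul_eq_mul]
    · rw [Matrix.det_eq_prod_roots_charpoly, hrep, Multiset.prod_replicate]
    · obtain ⟨w, hw, hwa⟩ := Matrix.exists_mulVec_eq_zero_iff.2
        (show (Matrix.scalar ι a - M g).det = 0 by
          rw [← Matrix.eval_charpoly]; exact (Polynomial.mem_roots'.1 ha).2)
      refine val_eigenvalue_sub_one_le (hH g hg) hw ?_
      rw [Matrix.sub_mulVec, sub_eq_zero] at hwa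
      rw [← hwa]; simp
  choose a ha using key
  by_cases hn0 : (n : K) = 0
  · have h0 : Matrix.traceLinearMap ι K K = 0 := by
      refine LinearMap.ext_on hspan ?_
      rintro _ ⟨g, hg, rfl⟩
      simpa [hn0] using (ha g hg).1
    have := LinearMap.congr_fun h0 (Matrix.single i i 1)
    simp at this
  let f : Matrix ι ι K →ₗ[K] K := (n : K)⁻¹ • Matrix.traceLinearMap ι K K
  have hf : ∀ g ∈ H, f (M g) = a g := by
    intro g hg
    simp [f, (ha g hg).1, hn0]
  have hmulH : ∀ g ∈ H, ∀ h ∈ H, a (g * h) = a g * a h := by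
    intro g hg h hh
    have hgh := H.mul_mem hg hh
    have v1 := val_eq_one_of_val_sub_one_lt ((ha _ hgh).2.2.trans_lt hr)
    have hne : a (g * h) ≠ 0 := by
      intro h0; rw [h0, map_zero] at v1; exact zero_ne_one v1
    have hz : (a g * a h / a (g * h)) ^ n = 1 := by
      rw [div_pow, mul_pow, ← (ha _ hg).2.1, ← (ha _ hh).2.1, ← (ha _ hgh).2.1, map_mul,
        Matrix.det_mul, ← Matrix.det_mul, ← map_mul, (ha _ hgh).2.1, div_self (pow_ne_zero _ hne)]
    have hz1 : v (a g * a h / a (g * h) - 1) < 1 := by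
      rw [div_sub_one hne, map_div₀, v1, div_one]
      refine lt_of_le_of_lt ?_ hr
      have e : a g * a h - a (g * h) = (a g - 1) * a h + ((a h - 1) - (a (g * h) - 1)) := by ring
      rw [e]
      refine v.map_add_le ?_ (v.map_sub_le (ha _ hh).2.2 (ha _ hgh).2.2)
      rw [map_mul, val_eq_one_of_val_sub_one_lt ((ha _ hh).2.2.trans_lt hr), mul_one]
      exact (ha _ hg).2.2
    have := eq_one_of_pow_eq_one hp hn0 hz hz1
    rw [div_eq_one_iff_eq hne] at this
    exact this.symm
  have hmul : ∀ A B, f (A * B) = f A * f B := by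
    intro A B
    have hA : A ∈ Submodule.span K (M '' (H : Set G)) := by rw [hspan]; trivial
    have hB : B ∈ Submodule.span K (M '' (H : Set G)) := by rw [hspan]; trivial
    induction hA, hB using Submodule.span_induction₂ with
    | mem_mem x y hx hy =>
      obtain ⟨g, hg, rfl⟩ := hx
      obtain ⟨h, hh, rfl⟩ := hy
      rw [← map_mul, hf _ hg, hf _ hh, hf _ (H.mul_mem hg hh), hmulH g hg h hh]
    | zero_left => simp
    | zero_right => simp
    | add_left x y z _ _ _ h1 h2 => rw [add_mul, map_add, map_add, h1, h2, add_mul]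
    | add_right x y z _ _ _ h1 h2 => rw [mul_add, map_add, map_add, h1, h2, mul_add]
    | smul_left c x y _ _ h => rw [smul_mul_assoc, map_smul, map_smul, h, smul_mul_assoc]
    | smul_right c x y _ _ h => rw [mul_smul_comm, map_smul, map_smul, h, mul_smul_comm]
  have h1 := hmul (Matrix.single i j 1) (Matrix.single j i 1)
  have h2 : f (Matrix.single i j 1) = 0 := by
    simp [f, Matrix.trace_single_eq_of_ne i j (1 : K) hij]
  rw [h2, zero_mul, Matrix.single_mul_single_same] at h1
  simp [f, hn0] at h1

end Irreducible

/-! ### The strongly irreducible case and induction on the dimension -/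

section Induction

open Module

variable {K : Type*} [Field K] {v : Valuation K ℝ≥0} {G : Type*} [Group G]
  {V : Type*} [AddCommGroup V] [Module K V]

/-- In characteristic `p`, the power `T ^ p ^ e` is diagonalizable for large `e`: on the
generalized eigenspace of `c` one has `T ^ p ^ e - c ^ p ^ e = (T - c) ^ p ^ e = 0`. -/
theorem exists_eigenbasis [IsAlgClosed K] {p : ℕ} (hp : p.Prime) [CharP K p]
    [FiniteDimensional K V] [Nontrivial V] (T : End K V) :
    ∃ (e N : ℕ) (b : Basis (Fin N) K V) (μ : Fin N → K),
      ∀ i, (T ^ p ^ e) (b i) = μ i • b i := by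
  have := Fact.mk hp
  have : CharP (End K V) p :=
    charP_of_injective_algebraMap (FaithfulSMul.algebraMap_injective K (End K V)) p
  obtain ⟨e, he⟩ : ∃ e, finrank K V ≤ p ^ e := ⟨_, (Nat.lt_pow_self hp.one_lt).le⟩
  let s : Set V := {w | ∃ c : K, (T ^ p ^ e) w = c • w}
  have hs : ⊤ ≤ Submodule.span K s := by
    rw [← Module.End.iSup_maxGenEigenspace_eq_top T]
    refine iSup_le fun c w hw => Submodule.subset_span ⟨c ^ p ^ e, ?_⟩
    rw [Module.End.maxGenEigenspace_eq_genEigenspace_finrank, Module.End.mem_genEigenspace_nat] at hw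
    have h1 : (T - c • 1) ^ p ^ e = T ^ p ^ e - (c ^ p ^ e) • 1 := by
      rw [sub_pow_char_pow_of_commute, smul_pow, one_pow]
      exact (Commute.one_right T).smul_right c
    have h2 : ((T - c • 1) ^ p ^ e) w = 0 := by
      rw [← Nat.sub_add_cancel he, pow_add, Module.End.mul_apply, LinearMap.mem_ker.1 hw, map_zero]
    rw [h1, LinearMap.sub_apply, sub_eq_zero] at h2
    simpa using h2
  let b := Basis.ofSpan hs
  have hb : ∀ i, b i ∈ s := fun i => Basis.ofSpan_subset hs ⟨i, rfl⟩
  choose μ hμ using hb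
  have := FiniteDimensional.fintypeBasisIndex b
  let φ := Fintype.equivFin ((linearIndepOn_empty K id).extend (Set.empty_subset s))
  exact ⟨e, _, b.reindex φ, μ ∘ φ.symm, fun i => by simpa using hμ (φ.symm i)⟩

/-- The matrix form of a representation in a given basis. -/
noncomputable def repMatrix {ι : Type*} [Fintype ι] [DecidableEq ι] (b : Basis ι K V)
    (ρ : G →* End K V) : G →* Matrix ι ι K :=
  ((LinearMap.toMatrixAlgEquiv b : End K V ≃ₐ[K] Matrix ι ι K) : End K V →* Matrix ι ι K).comp ρ

theorem repMatrix_apply {ι : Type*} [Fintype ι] [DecidableEq ι] (b : Basis ι K V)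
    (ρ : G →* End K V) (g : G) (i j : ι) : repMatrix b ρ g i j = b.coord i (ρ g (b j)) :=
  LinearMap.toMatrixAlgEquiv_apply b _ i j

theorem BoundedRep.exists_entriesLE {ι : Type*} [Fintype ι] [DecidableEq ι] (b : Basis ι K V)
    {ρ : G →* End K V} (hρ : BoundedRep v ρ) : ∃ B, ∀ g, EntriesLE v (repMatrix b ρ g) B := by
  choose B hB using fun x : ι × ι => hρ (b x.2) (b.coord x.1)
  refine ⟨Finset.univ.sup B, fun g i j => ?_⟩
  rw [repMatrix_apply]
  exact (hB (i, j) g).trans (Finset.le_sup (Finset.mem_univ (i, j)))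

/-- The strongly irreducible case. A small congruence subgroup still spans the matrix algebra, so
it contains `x` with two distinct eigenvalues, and `x ^ p ^ e` is diagonal in a suitable basis. If
no element of the congruence subgroup had a nonzero entry at a position where the difference of
eigenvalues is maximal, the basis vectors whose eigenvalue is close to a fixed one would span an
invariant subspace, contradicting irreducibility. -/
theorem LogRankGrowth.of_stronglyIrreducible [IsAlgClosed K] {p : ℕ} (hp : p.Prime) [CharP K p]
    {r : ℝ≥0} (hr0 : 0 < r) (hr : r < 1) (hfin : PolyFinite v r) [Group.FG G]
    [FiniteDimensional K V] {ρ : G →* End K V} (hb : BoundedRep v ρ)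
    (hirr : StronglyIrreducible ρ) (hns : ¬ VirtSolvableRep ρ) : LogRankGrowth G := by
  classical
  have hra : ∀ a : ℕ, r * r ^ a < 1 := fun a =>
    (mul_le_of_le_one_right' (pow_le_one' hr.le a)).trans_lt hr
  have hrr : r * r ^ 1 ≤ r := mul_le_of_le_one_right' (pow_le_one' hr.le 1)
  -- abelian images are excluded, so the dimension is at least two
  have hdim : 1 < finrank K V := by
    by_contra hle
    refine hns ⟨⊤, inferInstance, 1, fun g hg => ?_⟩
    have hcomm : ∀ S T : End K V, S * T = T * S := by
      have h1 : Module.rank K V ≤ 1 := by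
        rw [← Module.finrank_eq_rank]; exact_mod_cast not_lt.1 hle
      obtain ⟨w, hw⟩ := rank_le_one_iff.1 h1
      intro S T
      obtain ⟨s, hs⟩ := hw (S w)
      obtain ⟨t, ht⟩ := hw (T w)
      ext x
      obtain ⟨c, rfl⟩ := hw x
      simp only [Module.End.mul_apply, map_smul]
      rw [← hs, ← ht, map_smul, map_smul, ← hs, ← ht, smul_comm s t]
    have hle : iteratedCommutator (⊤ : Subgroup G) 1 ≤ ρ.ker := by
      refine Subgroup.commutator_le.2 fun a ha b hb => ?_
      have e : a * b * a⁻¹ * b⁻¹ = (a * b) * (b * a)⁻¹ := by simp [mul_assoc]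
      change ρ (a * b * a⁻¹ * b⁻¹) = 1
      rw [e, map_mul, map_mul ρ a b, hcomm (ρ a), ← map_mul, ← map_mul, mul_inv_cancel, map_one]
    exact hle hg
  have hV : Nontrivial V := Module.nontrivial_of_finrank_pos (zero_lt_one.trans hdim)
  let b₀ := Module.finBasis K V
  let M₀ := repMatrix b₀ ρ
  obtain ⟨B₀, hB₀⟩ := hb.exists_entriesLE b₀
  obtain ⟨C₀, hC₀⟩ := index_congSubgroup_le hr hfin M₀ B₀ hB₀ r r hr0 hr0 hra
  let H := congSubgroup v M₀ (r * r ^ 1) (hra 1)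
  have hspan : Submodule.span K (M₀ '' (H : Set G)) = ⊤ := by
    have h := span_eq_top_of_irreducible (hirr H ⟨(hC₀ 1 le_rfl).1⟩)
    have h' := congrArg (Submodule.map (LinearMap.toMatrixAlgEquiv b₀).toLinearMap) h
    rw [Submodule.map_span, ← Set.image_comp, Submodule.map_top,
      (LinearMap.range_eq_top (f := (LinearMap.toMatrixAlgEquiv b₀).toLinearMap)).2
      (LinearMap.toMatrixAlgEquiv b₀).surjective] at h'
    exact h'
  obtain ⟨x, hxH, α, β, hne, hα, hβ⟩ := exists_two_roots hp M₀ H (hra 1) (fun g hg => hg) hspan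
    (by simpa using hdim)
  obtain ⟨e, N, b, μ, hμ⟩ := exists_eigenbasis hp (ρ x)
  let M := repMatrix b ρ
  have hMx : M (x ^ p ^ e) = Matrix.diagonal μ := by
    ext i j
    rw [repMatrix_apply, map_pow, hμ, map_smul, Basis.coord_apply, Basis.repr_self,
      Matrix.diagonal_apply, Finsupp.single_apply]
    rcases eq_or_ne i j with rfl | hij
    · simp
    · simp [hij, hij.symm]
  have hμ1 : ∀ i, v (μ i - 1) ≤ r := by
    intro i
    have hxq : x ^ p ^ e ∈ H := H.pow_mem hxH _
    refine val_eigenvalue_sub_one_le (EntriesLE.mono hxq hrr) (w := b₀.equivFun (b i)) ?_ ?_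
    · simp [b.ne_zero i]
    · have := LinearMap.toMatrix_mulVec_repr b₀ b₀ (ρ (x ^ p ^ e)) (b i)
      rw [map_pow, hμ, map_smul, ← map_pow] at this
      exact this
  -- the eigenvalues `α ^ q` and `β ^ q` of `x ^ q` both occur among the `μ i`
  have hocc : ∀ c, c ∈ (M₀ x).charpoly.roots → ∃ i, μ i = c ^ p ^ e := by
    intro c hc
    have hroot : (ρ x).charpoly.IsRoot c := by
      rw [← LinearMap.charpoly_toMatrix (ρ x) b₀]
      exact (Polynomial.mem_roots'.1 hc).2
    rw [← Module.End.hasEigenvalue_iff_isRoot_charpoly] at hroot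
    obtain ⟨w, hw⟩ := hroot.exists_hasEigenvector
    have hw1 := hw.pow_apply (p ^ e)
    have hw0 : b.repr w ≠ 0 := by simpa using hw.2
    obtain ⟨i, hi⟩ := Finsupp.ne_iff.1 hw0
    refine ⟨i, mul_right_cancel₀ hi ?_⟩
    have h2 : b.coord i ∘ₗ (ρ x ^ p ^ e) = μ i • b.coord i := by
      refine b.ext fun j => ?_
      rw [LinearMap.comp_apply, hμ, map_smul, LinearMap.smul_apply, Basis.coord_apply,
        Basis.repr_self, Finsupp.single_apply]
      split_ifs with h
      · rw [h]
      · simp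
    have h3 := LinearMap.congr_fun h2 w
    rw [LinearMap.comp_apply, hw1, map_smul, LinearMap.smul_apply] at h3
    exact h3.symm
  obtain ⟨i₁, hi₁⟩ := hocc α hα
  obtain ⟨j₁, hj₁⟩ := hocc β hβ
  have hne' : μ i₁ ≠ μ j₁ := by
    have := Fact.mk hp
    rw [hi₁, hj₁]
    exact fun h => hne (iterateFrobenius_inj K p e h)
  have hne_ι : Nonempty (Fin N × Fin N) := ⟨(i₁, j₁)⟩
  obtain ⟨⟨i₀, j₀⟩, hmax⟩ := Finite.exists_max fun z : Fin N × Fin N => v (μ z.1 - μ z.2)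
  set s := v (μ i₀ - μ j₀) with hs
  have hs0 : 0 < s := lt_of_lt_of_le
    (pos_iff_ne_zero.2 (v.ne_zero_iff.2 (sub_ne_zero.2 hne'))) (hmax (i₁, j₁))
  have hs1 : s < 1 := by
    have e : μ i₀ - μ j₀ = (μ i₀ - 1) - (μ j₀ - 1) := by ring
    rw [hs, e]
    exact (v.map_sub_le (hμ1 _) (hμ1 _)).trans_lt hr
  obtain ⟨B, hB⟩ := hb.exists_entriesLE b
  obtain ⟨C, hC⟩ := index_congSubgroup_le hr hfin M B hB r r hr0 hr0 hra
  let H' := congSubgroup v M (r * r ^ 1) (hra 1)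
  have hy : ∃ y ∈ H', ∃ i j, v (μ i - μ j) = s ∧ M y i j ≠ 0 := by
    by_contra! hcon
    let W : Submodule K V := Submodule.span K (b '' {i | v (μ i - μ j₀) < s})
    have hWst : Stable ρ H' W := by
      intro h hh w hw
      have hWle : W ≤ W.comap (ρ h) := by
        refine Submodule.span_le.2 ?_
        rintro _ ⟨j, hj, rfl⟩
        change ρ h (b j) ∈ W
        rw [← b.sum_repr (ρ h (b j))]
        refine Submodule.sum_mem _ fun i _ => ?_
        by_cases hi : v (μ i - μ j₀) < s
        · exact W.smul_mem _ (Submodule.subset_span ⟨i, hi, rfl⟩)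
        have hi' : v (μ i - μ j₀) = s := le_antisymm (hmax (i, j₀)) (not_lt.1 hi)
        have hij : v (μ i - μ j) = s := by
          have e : μ i - μ j = (μ i - μ j₀) - (μ j - μ j₀) := by ring
          rw [e, Valuation.map_sub_eq_of_lt_left _ (by rw [hi']; exact hj), hi']
        have := hcon h hh i j hij
        rw [repMatrix_apply, Basis.coord_apply] at this
        rw [this, zero_smul]; exact W.zero_mem
      exact hWle hw
    rcases hirr H' ⟨(hC 1 le_rfl).1⟩ W hWst with h | h
    · have hmem : b j₀ ∈ W := Submodule.subset_span ⟨j₀, by simpa using hs0, rfl⟩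
      rw [h, Submodule.mem_bot] at hmem
      exact b.ne_zero _ hmem
    · have hmem : b i₀ ∈ W := by rw [h]; trivial
      have := b.mem_span_image.1 hmem
      rw [Basis.repr_self, Finsupp.support_single _ one_ne_zero] at this
      have := this (by simp : i₀ ∈ _)
      exact lt_irrefl s this
  obtain ⟨y, hyH, i, j, hij, hyij⟩ := hy
  exact LogRankGrowth.of_diagonal hp hr hfin M B hB hMx
    (fun i => val_eq_one_of_val_sub_one_lt ((hμ1 i).trans_lt hr)) hs0 hs1
    (fun i j => hmax (i, j)) (EntriesLE.mono hyH hrr) hij hyij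

/-- Induction on the dimension: if a finite-index subgroup stabilizes a proper nonzero subspace `W`,
then its action on `W` or on `V ⧸ W` is not virtually solvable, and both have smaller dimension. -/
theorem LogRankGrowth.of_boundedRep {K : Type*} [Field K] {v : Valuation K ℝ≥0} [IsAlgClosed K]
    {p : ℕ} (hp : p.Prime) [CharP K p]
    {r : ℝ≥0} (hr0 : 0 < r) (hr : r < 1) (hfin : PolyFinite v r) (n : ℕ) :
    ∀ {G : Type*} [Group G] [Group.FG G] {V : Type*} [AddCommGroup V] [Module K V]
      [FiniteDimensional K V] {ρ : G →* End K V}, finrank K V = n → BoundedRep v ρ →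
      ¬ VirtSolvableRep ρ → LogRankGrowth G := by
  induction n using Nat.strong_induction_on with
  | _ n ih =>
    intro G _ _ V _ _ _ ρ hn hb hns
    by_cases hirr : StronglyIrreducible ρ
    · exact LogRankGrowth.of_stronglyIrreducible hp hr0 hr hfin hb hirr hns
    unfold StronglyIrreducible at hirr
    push Not at hirr
    obtain ⟨H, hH, W, hW, hbot, htop⟩ := hirr
    have : Group.FG H := inferInstance
    refine LogRankGrowth.of_finiteIndex H ?_
    by_cases h1 : VirtSolvableRep (subRep hW)
    · refine ih _ ?_ rfl (hb.quotRep hW) fun h2 => hns (h1.of_sub_quot hW h2)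
      have h3 := Submodule.finrank_quotient_add_finrank W
      have h4 : finrank K W ≠ 0 := by rwa [Ne, Submodule.finrank_eq_zero]
      omega
    · exact ih _ (hn ▸ Submodule.finrank_lt htop) rfl (hb.subRep hW) h1

end Induction

/-! ### The algebraic closure of the field of Laurent series -/

section LocalField

open Module

/-- If the balls of a complete field `K₀` have exponentially growing covering numbers, then every
algebraic ultrametric extension `L` satisfies `PolyFinite`: a finite subset of `L` generates a
finite-dimensional extension `E`, on which the coordinates with respect to a basis are
continuous, so that a colouring of `K₀` can be applied coordinatewise. -/
theorem polyFinite_of_isAlgebraic {K₀ L : Type*} [NontriviallyNormedField K₀] [CompleteSpace K₀]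
    [NormedField L] [NormedAlgebra K₀ L] [IsUltrametricDist L] [Algebra.IsAlgebraic K₀ L]
    {r : ℝ≥0} (hr : r < 1)
    (h₀ : ∀ B : ℝ≥0, ∃ C : ℕ, ∀ k, 1 ≤ k → ∃ f : K₀ → Fin (C ^ k), ∀ z w, ‖z‖₊ ≤ B → ‖w‖₊ ≤ B →
      f z = f w → ‖z - w‖₊ ≤ r ^ k) :
    PolyFinite (NormedField.valuation : Valuation L ℝ≥0) r := by
  classical
  intro S
  let E := IntermediateField.adjoin K₀ (S : Set L)
  have hE : FiniteDimensional K₀ E := IntermediateField.finiteDimensional_adjoin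
    fun x _ => Algebra.IsIntegral.isIntegral x
  let W : Submodule K₀ L := Subalgebra.toSubmodule E.toSubalgebra
  have hW : FiniteDimensional K₀ W := hE
  refine ⟨E.toSubring, IntermediateField.subset_adjoin K₀ _, fun B => ?_⟩
  let b := Module.finBasis K₀ W
  let N := finrank K₀ W
  let c : Fin N → (W →L[K₀] K₀) := fun i => LinearMap.toContinuousLinearMap (b.coord i)
  let B' : ℝ≥0 := (Finset.univ.sup fun i => ‖c i‖₊) * B
  have hc : ∀ (z : W), ‖z‖₊ ≤ B → ∀ i, ‖b.coord i z‖₊ ≤ B' := by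
    intro z hz i
    have h1 : ‖c i z‖₊ ≤ ‖c i‖₊ * ‖z‖₊ := (c i).le_opNNNorm z
    exact h1.trans (mul_le_mul' (Finset.le_sup (f := fun i => ‖c i‖₊) (Finset.mem_univ i)) hz)
  obtain ⟨C, hC⟩ := h₀ B'
  let D : ℝ≥0 := Finset.univ.sup fun i => ‖(b i : L)‖₊
  obtain ⟨m, hm⟩ : ∃ m : ℕ, D * r ^ m ≤ 1 := by
    have ht : Filter.Tendsto (fun m : ℕ => D * r ^ m) Filter.atTop (nhds (D * 0)) :=
      (NNReal.tendsto_pow_atTop_nhds_zero_of_lt_one hr).const_mul D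
    rw [mul_zero] at ht
    exact (ht.eventually_le_const zero_lt_one).exists
  have hC1 : 1 ≤ C := by
    obtain ⟨f, -⟩ := hC 1 le_rfl
    have := (f 0).pos
    simpa [Nat.one_le_iff_ne_zero, pos_iff_ne_zero] using this
  refine ⟨C ^ ((1 + m) * N), fun k hk => ?_⟩
  obtain ⟨f, hf⟩ := hC (k + m) (by omega)
  have hcard : Fintype.card (Fin N → Fin (C ^ (k + m))) ≤ (C ^ ((1 + m) * N)) ^ k := by
    rw [Fintype.card_fun, Fintype.card_fin, Fintype.card_fin, ← pow_mul, ← pow_mul]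
    refine Nat.pow_le_pow_right hC1 ?_
    calc (k + m) * N ≤ (k * (1 + m)) * N := Nat.mul_le_mul_right _ (by nlinarith)
      _ = (1 + m) * N * k := by ring
  let φ : (Fin N → Fin (C ^ (k + m))) → Fin ((C ^ ((1 + m) * N)) ^ k) := fun t =>
    Fin.castLE hcard (Fintype.equivFin _ t)
  have hφ : Function.Injective φ := fun s t h =>
    (Fintype.equivFin _).injective (Fin.castLE_injective hcard h)
  refine ⟨fun z => if hz : z ∈ W then φ fun i => f (b.coord i ⟨z, hz⟩) else φ fun _ => f 0,
    fun z hz w hw hzB hwB hzw => ?_⟩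
  have hz : z ∈ W := hz
  have hw : w ∈ W := hw
  simp only [dif_pos hz, dif_pos hw] at hzw
  have hcol := hφ hzw
  have hi : ∀ i, ‖b.coord i (⟨z, hz⟩ - ⟨w, hw⟩)‖₊ ≤ r ^ (k + m) := by
    intro i
    rw [map_sub]
    exact hf _ _ (hc _ hzB i) (hc _ hwB i) (congrFun hcol i)
  have hsum : z - w = ∑ i, b.coord i (⟨z, hz⟩ - ⟨w, hw⟩) • (b i : L) := by
    have := congrArg Subtype.val (b.sum_repr (⟨z, hz⟩ - ⟨w, hw⟩))
    rw [Submodule.coe_sum] at this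
    exact this.symm
  rw [hsum]
  refine Valuation.map_sum_le _ fun i _ => ?_
  rw [NormedField.valuation_apply, nnnorm_smul]
  calc _ ≤ r ^ (k + m) * D :=
        mul_le_mul' (hi i) (Finset.le_sup (f := fun i => ‖(b i : L)‖₊) (Finset.mem_univ i))
    _ = r ^ k * (D * r ^ m) := by ring
    _ ≤ r ^ k := mul_le_of_le_one_right' hm

open scoped WithZero in
/-- The field of Laurent series over `ZMod p` is complete and its balls have exponentially growing
covering numbers (the colour of a series is its truncation); power series have norm at most `1`. -/
theorem exists_coloured_field (p : ℕ) (hp : p.Prime) :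
    ∃ (K₀ : Type) (_ : NontriviallyNormedField K₀) (_ : IsUltrametricDist K₀)
      (_ : CompleteSpace K₀) (_ : CharP K₀ p) (r : ℝ≥0) (φ : PowerSeries (ZMod p) →+* K₀),
      0 < r ∧ r < 1 ∧ (∀ B : ℝ≥0, ∃ C : ℕ, ∀ k, 1 ≤ k → ∃ f : K₀ → Fin (C ^ k), ∀ z w,
        ‖z‖₊ ≤ B → ‖w‖₊ ≤ B → f z = f w → ‖z - w‖₊ ≤ r ^ k) ∧
      Function.Injective φ ∧ ∀ f, ‖φ f‖₊ ≤ 1 := by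
  have := Fact.mk hp
  have hnt : (Valued.v : Valuation (LaurentSeries (ZMod p)) ℤᵐ⁰).IsNontrivial := by
    refine ⟨HahnSeries.single 1 1, ?_, ?_⟩ <;> rw [LaurentSeries.valuation_single_zpow]
    · exact WithZero.exp_ne_zero
    · rw [← WithZero.exp_zero, Ne, WithZero.exp_inj]; decide
  let hR : (Valued.v : Valuation (LaurentSeries (ZMod p)) ℤᵐ⁰).RankOne :=
    Valuation.IsRankOneDiscrete.rankOne _ (e := 2) one_lt_two
  let hK : NontriviallyNormedField (LaurentSeries (ZMod p)) :=
    Valued.toNontriviallyNormedField (LaurentSeries (ZMod p)) ℤᵐ⁰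
  have hle : ∀ x y : LaurentSeries (ZMod p), ‖x‖₊ ≤ ‖y‖₊ ↔ Valued.v x ≤ Valued.v y := fun x y =>
    Valued.toNormedField.norm_le_iff (hv := hR)
  have hu : IsUltrametricDist (LaurentSeries (ZMod p)) :=
    IsUltrametricDist.isUltrametricDist_of_isNonarchimedean_norm
      (Valued.isNonarchimedean_norm (hv := hR))
  let t : ℤ → LaurentSeries (ZMod p) := fun s => HahnSeries.single s (1 : ZMod p)
  have ht : ∀ s, Valued.v (t s) = WithZero.exp (-s) := LaurentSeries.valuation_single_zpow (ZMod p)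
  let r : ℝ≥0 := ‖t 1‖₊
  have htpow : ∀ k : ℕ, ‖t k‖₊ = r ^ k := by
    intro k
    rw [← nnnorm_pow]
    congr 1
    simp [t, HahnSeries.single_pow]
  have hr0 : 0 < r := by
    rw [nnnorm_pos]
    simp [t]
  have htinv : ∀ k : ℕ, ‖t (-k)‖₊ = r⁻¹ ^ k := by
    intro k
    rw [inv_pow, ← htpow, ← nnnorm_inv]
    congr 1
    simp [t]
  have hr : r < 1 := by
    rw [← nnnorm_one (G := LaurentSeries (ZMod p)), ← not_le, hle, ht, map_one, not_le]
    rw [← WithZero.exp_zero, WithZero.exp_lt_exp]; decide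
  refine ⟨LaurentSeries (ZMod p), hK, hu,
    LaurentSeries.instLaurentSeriesComplete,
    charP_of_injective_ringHom (HahnSeries.C_injective (Γ := ℤ) (R := ZMod p)) p, r,
    HahnSeries.ofPowerSeries ℤ (ZMod p), hr0, hr, fun B => ?_, HahnSeries.ofPowerSeries_injective,
    fun f => ?_⟩
  · obtain ⟨m, hm⟩ := pow_unbounded_of_one_lt B ((one_lt_inv₀ hr0).2 hr)
    have hcoeff : ∀ z : LaurentSeries (ZMod p), ‖z‖₊ ≤ B → ∀ n : ℤ, n < -m → z.coeff n = 0 := by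
      intro z hz
      rw [← LaurentSeries.valuation_le_iff_coeff_lt_eq_zero, ← ht, ← hle, htinv]
      exact hz.trans hm.le
    refine ⟨p ^ (m + 1), fun k hk => ?_⟩
    have hcard : Fintype.card (Fin (m + k) → ZMod p) ≤ (p ^ (m + 1)) ^ k := by
      rw [Fintype.card_fun, ZMod.card, Fintype.card_fin, ← pow_mul]
      exact Nat.pow_le_pow_right hp.pos (by nlinarith)
    refine ⟨fun z => Fin.castLE hcard (Fintype.equivFin _ fun i => z.coeff ((i : ℤ) - m)),
      fun z w hz hw hzw => ?_⟩
    have hzw' := (Fintype.equivFin _).injective (Fin.castLE_injective hcard hzw)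
    rw [← htpow, hle, ht, LaurentSeries.valuation_le_iff_coeff_lt_eq_zero]
    intro n hn
    rw [HahnSeries.coeff_sub, sub_eq_zero]
    rcases lt_or_ge n (-m) with h | h
    · rw [hcoeff z hz n h, hcoeff w hw n h]
    · obtain ⟨i, hi⟩ := Int.eq_ofNat_of_zero_le (by linarith : 0 ≤ n + m)
      have := congrFun hzw' ⟨i, by omega⟩
      have e : n = (i : ℤ) - m := by omega
      rw [e]
      exact this
  · rw [← nnnorm_one (G := LaurentSeries (ZMod p)), hle, map_one,
      LaurentSeries.val_le_one_iff_eq_coe]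
    exact ⟨f, rfl⟩

/-- An algebraic closure of the field of Laurent series over `ZMod p`, with the spectral norm, is
an algebraically closed field of characteristic `p` satisfying `PolyFinite`, whose valuation ring
contains the power series ring. -/
theorem exists_polyFinite_field (p : ℕ) (hp : p.Prime) :
    ∃ (K : Type) (_ : Field K) (_ : IsAlgClosed K) (_ : CharP K p) (v : Valuation K ℝ≥0)
      (r : ℝ≥0) (φ : PowerSeries (ZMod p) →+* K), 0 < r ∧ r < 1 ∧ PolyFinite v r ∧
      Function.Injective φ ∧ ∀ f, v (φ f) ≤ 1 := by
  obtain ⟨K₀, _, _, _, _, r, φ, hr0, hr, hcol, hinj, hle⟩ := exists_coloured_field p hp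
  let hL : NormedField (AlgebraicClosure K₀) := spectralNorm.normedField K₀ (AlgebraicClosure K₀)
  let hA : NormedAlgebra K₀ (AlgebraicClosure K₀) :=
    spectralNorm.normedAlgebra K₀ (AlgebraicClosure K₀)
  have hult : IsUltrametricDist (AlgebraicClosure K₀) :=
    IsUltrametricDist.isUltrametricDist_of_isNonarchimedean_norm isNonarchimedean_spectralNorm
  refine ⟨AlgebraicClosure K₀, inferInstance, inferInstance,
    charP_of_injective_algebraMap (FaithfulSMul.algebraMap_injective K₀ _) p,
    NormedField.valuation, r, (algebraMap K₀ (AlgebraicClosure K₀)).comp φ, hr0, hr,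
    polyFinite_of_isAlgebraic hr hcol, (algebraMap K₀ (AlgebraicClosure K₀)).injective.comp hinj,
    fun f => ?_⟩
  have : ‖algebraMap K₀ (AlgebraicClosure K₀) (φ f)‖₊ = ‖φ f‖₊ := nnnorm_algebraMap' _ _
  exact this.trans_le (hle f)

end LocalField

/-! ### Embedding finitely generated rings of characteristic `p` -/

section Embedding

/-- The power series ring over `ZMod p` has infinite transcendence degree: otherwise it would be
algebraic over a countable ring, hence countable. -/
theorem exists_algebraicIndependent_powerSeries (p d : ℕ) [Fact p.Prime] :
    ∃ x : Fin d → PowerSeries (ZMod p), AlgebraicIndependent (ZMod p) x := by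
  have : FaithfulSMul (ZMod p) (PowerSeries (ZMod p)) :=
    (faithfulSMul_iff_algebraMap_injective _ _).2 (algebraMap (ZMod p) _).injective
  obtain ⟨s, hs⟩ := exists_isTranscendenceBasis (ZMod p) (PowerSeries (ZMod p))
  have hinf : s.Infinite := by
    intro hfin
    have := hfin.to_subtype
    let A := Algebra.adjoin (ZMod p) (Set.range ((↑) : s → PowerSeries (ZMod p)))
    have halg : Algebra.IsAlgebraic A (PowerSeries (ZMod p)) := hs.isAlgebraic
    have hA : Countable A := by
      have h := Algebra.adjoin_range_eq_range_aeval (ZMod p) ((↑) : s → PowerSeries (ZMod p))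
      have h2 : (A : Set (PowerSeries (ZMod p))).Countable := by
        rw [show A = _ from h]
        have : Countable (MvPolynomial s (ZMod p)) := by
          rw [← Cardinal.mk_le_aleph0_iff]
          refine MvPolynomial.cardinalMk_le_max.trans ?_
          simp
        exact Set.countable_range _
      exact h2.to_subtype
    have hc := Algebraic.countable A (PowerSeries (ZMod p))
    have huniv : {x : PowerSeries (ZMod p) | IsAlgebraic A x} = Set.univ :=
      Set.eq_univ_of_forall fun x => Algebra.IsAlgebraic.isAlgebraic x
    rw [huniv, Set.countable_univ_iff] at hc
    have hcount : Countable (Set ℕ) := by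
      classical
      refine Function.Injective.countable
        (f := fun t : Set ℕ => (PowerSeries.mk fun n => if n ∈ t then 1 else 0 :
          PowerSeries (ZMod p))) fun t u h => ?_
      ext n
      have := congrArg (PowerSeries.coeff n) h
      simp only [PowerSeries.coeff_mk] at this
      by_cases h1 : n ∈ t <;> by_cases h2 : n ∈ u <;> simp_all
    obtain ⟨f, hf⟩ := exists_injective_nat (Set ℕ)
    exact Function.cantor_injective f hf
  have := hinf.to_subtype
  let e := (Infinite.natEmbedding s)
  exact ⟨fun i => e i, hs.1.comp (fun i : Fin d => e i) fun i j h => Fin.ext (e.injective h)⟩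

/-- Every finite subset of a field of characteristic `p` lies in a subring which embeds into the
valuation ring of `K`. By Noether normalization, the generated algebra is integral over a
polynomial ring. The latter embeds into the power series ring, the embedding extends to the
algebraically closed field `K`, and integrality keeps the values at most `1`. -/
theorem exists_embedding {K F : Type*} [Field K] [IsAlgClosed K] [Field F] {p : ℕ} (hp : p.Prime)
    [CharP F p] {v : Valuation K ℝ≥0} {φ : PowerSeries (ZMod p) →+* K}
    (hφ : Function.Injective φ) (hv : ∀ f, v (φ f) ≤ 1) (S : Finset F) :
    ∃ (A : Subring F) (ψ : A →+* K), (S : Set F) ⊆ A ∧ Function.Injective ψ ∧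
      ∀ a, v (ψ a) ≤ 1 := by
  have := Fact.mk hp
  let _ : Algebra (ZMod p) F := ZMod.algebra F p
  let A := Algebra.adjoin (ZMod p) (S : Set F)
  have hft : Algebra.FiniteType (ZMod p) A :=
    (Subalgebra.fg_iff_finiteType _).1 ⟨S, rfl⟩
  obtain ⟨d, g, hginj, hgint⟩ := exists_integral_inj_algHom_of_fg (ZMod p) A
  obtain ⟨x, hx⟩ := exists_algebraicIndependent_powerSeries p d
  let R := MvPolynomial (Fin d) (ZMod p)
  let θ : R →+* K := φ.comp (MvPolynomial.aeval x : R →ₐ[ZMod p] PowerSeries (ZMod p))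
  have hθ : Function.Injective θ := hφ.comp hx
  let _ : Algebra R A := g.toRingHom.toAlgebra
  let _ : Algebra R K := θ.toAlgebra
  have h_integral : Algebra.IsIntegral R A := ⟨hgint⟩
  have : FaithfulSMul R A := (faithfulSMul_iff_algebraMap_injective _ _).2 hginj
  have : FaithfulSMul R K := (faithfulSMul_iff_algebraMap_injective _ _).2 hθ
  let ψ : A →ₐ[R] K := IsAlgClosed.lift
  have hψ : Function.Injective ψ.toRingHom := by
    rw [RingHom.injective_iff_ker_eq_bot]
    refine Ideal.eq_bot_of_comap_eq_bot (R := R) ?_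
    rw [RingHom.comap_ker, ← RingHom.injective_iff_ker_eq_bot]
    have h : ψ.toRingHom.comp (algebraMap R A) = θ := ψ.comp_algebraMap
    rw [h]; exact hθ
  refine ⟨A.toSubring, ψ.toRingHom, Algebra.subset_adjoin, hψ, fun a => ?_⟩
  · obtain ⟨P, hP, hP0⟩ := h_integral.isIntegral a
    let θ' : R →+* v.integer := θ.codRestrict v.integer fun f => hv _
    have hI : IsIntegral v.integer (ψ a) := by
      refine ⟨P.map θ', hP.map _, ?_⟩
      rw [Polynomial.eval₂_map]
      have h1 := congrArg ψ.toRingHom hP0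
      rw [Polynomial.hom_eval₂, map_zero] at h1
      have h2 : ψ.toRingHom.comp (algebraMap R A) = θ := ψ.comp_algebraMap
      rw [h2] at h1
      exact h1
    exact Valuation.Integers.mem_of_integral (Valuation.integer.integers v) hI

end Embedding

/-! ### The logarithmic lower bound for linear groups -/

section Final

/-- An embedding of a ring containing all entries of `Γ` turns `Γ` into a matrix group over `K`. -/
theorem exists_matrix_rep {K F : Type*} [Field K] [Field F] {n : ℕ} {Γ : Subgroup (GL (Fin n) F)}
    {A : Subring F} {ψ : A →+* K} (hψ : Function.Injective ψ)
    (hA : ∀ (g : Γ) i j, (g : GL (Fin n) F).1 i j ∈ A) :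
    ∃ M : Γ →* Matrix (Fin n) (Fin n) K,
      Function.Injective M ∧ ∀ g i j, M g i j = ψ ⟨_, hA g i j⟩ := by
  refine ⟨{ toFun := fun g => Matrix.of fun i j => ψ ⟨_, hA g i j⟩
            map_one' := ?_
            map_mul' := fun g h => ?_ }, fun g h hgh => ?_, fun g i j => rfl⟩
  · ext i j
    rw [Matrix.of_apply, Matrix.one_apply]
    split_ifs with h
    · rw [← map_one ψ]; congr 1; ext; simp [h]
    · rw [← map_zero ψ]; congr 1; ext; simp [h]
  · ext i j
    simp only [Matrix.of_apply, Matrix.mul_apply, ← map_mul, ← map_sum]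
    congr 1
    ext
    simp [Matrix.mul_apply]
  · apply Subtype.ext
    apply Units.ext
    ext i j
    have h1 : ψ ⟨_, hA g i j⟩ = ψ ⟨_, hA h i j⟩ := congrFun (congrFun hgh i) j
    exact congrArg Subtype.val (hψ h1)

theorem isSolvable_of_virtSolvableRep {K V G : Type*} [Field K] [AddCommGroup V] [Module K V]
    [Group G] {ρ : G →* Module.End K V} (hinj : Function.Injective ρ) (h : VirtSolvableRep ρ) :
    ∃ H : Subgroup G, H.FiniteIndex ∧ IsSolvable H := by
  obtain ⟨H, hH, k, hk⟩ := h
  refine ⟨H, hH, ⟨k, ?_⟩⟩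
  rw [← iteratedCommutator_top, eq_bot_iff]
  intro g hg
  have h1 : (g : G) ∈ (iteratedCommutator (⊤ : Subgroup H) k).map H.subtype := ⟨g, hg, rfl⟩
  rw [map_iteratedCommutator, ← MonoidHom.range_eq_map, Subgroup.range_subtype] at h1
  have h2 : (g : G) = 1 := hinj (by rw [hk _ h1, map_one])
  rw [Subgroup.mem_bot]
  exact Subtype.ext h2

end Final

/-- Let `F` be a field of positive characteristic `p`, `n` a positive
integer, and `Γ` a finitely generated infinite subgroup of `GL n F` which is not virtually
solvable. Then there exist `c > 0` and a sequence of finite-index subgroups `Γᵢ ≤ Γ` with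
indices `nᵢ = [Γ : Γᵢ] → ∞` such that `d(Γᵢ) ≥ c · log nᵢ` (log base 2), i.e. every finite
generating set of `Γᵢ` has cardinality at least `c · log nᵢ`. -/
theorem stmt1 (F : Type*) [Field F] (p : ℕ) (hp : p.Prime) [CharP F p] (n : ℕ) (hn : 0 < n)
    (Γ : Subgroup (GL (Fin n) F)) (hfg : Group.FG Γ) (hinf : Infinite Γ)
    (hnvs : ¬ ∃ H : Subgroup Γ, H.FiniteIndex ∧ IsSolvable H) :
    ∃ c : ℝ, 0 < c ∧ ∃ Γi : ℕ → Subgroup Γ,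
      (∀ i, (Γi i).FiniteIndex) ∧
      Filter.Tendsto (fun i => (Γi i).index) Filter.atTop Filter.atTop ∧
      ∀ i, ∀ S : Finset (Γi i), Subgroup.closure (S : Set (Γi i)) = ⊤ →
        c * Real.logb 2 ((Γi i).index) ≤ (S.card : ℝ) := by
  classical
  obtain ⟨K, _, _, _, v, r, φ, hr0, hr, hfin, hφ, hv⟩ := exists_polyFinite_field p hp
  obtain ⟨T, hT⟩ := hfg.out
  let S : Finset F := (T ∪ T.image (·⁻¹)).biUnion fun g =>
    Finset.univ.image fun x : Fin n × Fin n => (g : GL (Fin n) F).1 x.1 x.2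
  obtain ⟨A, ψ, hSA, hψ, hψv⟩ := exists_embedding hp hφ hv S
  have hA : ∀ (g : Γ) i j, (g : GL (Fin n) F).1 i j ∈ A := by
    intro g
    have hg : g ∈ Subgroup.closure (T : Set Γ) := by rw [hT]; trivial
    induction hg using Subgroup.closure_induction'' with
    | mem x hx =>
      intro i j
      refine hSA (Finset.mem_coe.2 (Finset.mem_biUnion.2 ⟨x, by simp_all, ?_⟩))
      exact Finset.mem_image.2 ⟨(i, j), by simp⟩
    | inv_mem x hx =>
      intro i j
      refine hSA (Finset.mem_coe.2 (Finset.mem_biUnion.2 ⟨x⁻¹, by simp_all, ?_⟩))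
      exact Finset.mem_image.2 ⟨(i, j), by simp⟩
    | one =>
      intro i j
      rw [Subgroup.coe_one, Units.val_one, Matrix.one_apply]
      split_ifs
      exacts [A.one_mem, A.zero_mem]
    | mul x y _ _ hx hy =>
      intro i j
      rw [Subgroup.coe_mul, Units.val_mul, Matrix.mul_apply]
      exact A.sum_mem fun k _ => A.mul_mem (hx i k) (hy k j)
  obtain ⟨M, hMinj, hM⟩ := exists_matrix_rep hψ hA
  let τ : Matrix (Fin n) (Fin n) K ≃ₐ[K] Module.End K (Fin n → K) := Matrix.toLinAlgEquiv'
  let ρ : Γ →* Module.End K (Fin n → K) := (τ : Matrix (Fin n) (Fin n) K →* _).comp M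
  have hρ : Function.Injective ρ := τ.injective.comp hMinj
  have hbdd : BoundedRep v ρ := by
    intro w f
    let a : Fin n → K := fun i => f (Pi.single i 1)
    refine ⟨Finset.univ.sup fun x : Fin n × Fin n => v (a x.1) * v (w x.2), fun g => ?_⟩
    have h1 : f (ρ g w) = ∑ i, (∑ j, M g i j * w j) * a i := by
      rw [LinearMap.pi_apply_eq_sum_univ f (ρ g w)]
      exact Finset.sum_congr rfl fun i _ => by
        rw [smul_eq_mul]
        congr 2
        · ext j; simp [Pi.single_apply, eq_comm]
    rw [h1]
    refine v.map_sum_le fun i _ => ?_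
    rw [Finset.sum_mul]
    refine v.map_sum_le fun j _ => ?_
    rw [map_mul, map_mul]
    refine le_trans ?_ (Finset.le_sup (f := fun x : Fin n × Fin n => v (a x.1) * v (w x.2))
      (Finset.mem_univ (i, j)))
    have h2 : v (M g i j) ≤ 1 := by rw [hM]; exact hψv _
    calc v (M g i j) * v (w j) * v (a i) ≤ 1 * v (w j) * v (a i) := by gcongr
      _ = v (a i) * v (w j) := by ring
  exact LogRankGrowth.of_boundedRep hp hr0 hr hfin _ rfl hbdd
    fun h => hnvs (isSolvable_of_virtSolvableRep hρ h)
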